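/- Let k ≥ 3 be an integer with k ∉ {4,5}. For all sufficiently large n, if G is an n-vertex W_{2k+1}-free simple graph attaining the maximum spectral radius among all n-vertex W_{2k+1}-free graphs, V(G) = L ⊔ R is a maximum cut of G, and L contains a vertex of internal degree k − 1, then every vertex of L is adjacent to every vertex of R; that is, the number of edges between L and R equals |L|·|R|. -/

import Mathlib

/-- The wheel graph on `t` vertices: vertex `0` joined to every vertex of the
cycle `1, 2, …, t-1` (with `t-1` adjacent to `1`). -/
def wheelGraph (t : ℕ) : SimpleGraph (Fin t) where
  Adj a b := a ≠ b ∧ (a.val = 0 ∨ b.val = 0 ∨ a.val + 1 = b.val ∨ b.val + 1 = a.val ∨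
      (a.val = 1 ∧ b.val = t - 1) ∨ (b.val = 1 ∧ a.val = t - 1))
  symm := by
    constructor
    intro a b h
    exact ⟨h.1.symm, by tauto⟩
  loopless := by
    constructor
    intro a h
    exact h.1 rfl

/-- `G` contains a copy of `F`, i.e. a subgraph isomorphic to `F`. -/
def ContainsCopy {α β : Type*} (F : SimpleGraph α) (G : SimpleGraph β) : Prop :=
  ∃ f : α ↪ β, ∀ a b, F.Adj a b → G.Adj (f a) (f b)

/-- `G` is `W_t`-free: it contains no subgraph isomorphic to the wheel on `t` vertices. -/
def WheelFree (t : ℕ) {n : ℕ} (G : SimpleGraph (Fin n)) : Prop :=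
  ¬ ContainsCopy (wheelGraph t) G

/-- The spectral radius of `G`: the largest eigenvalue of its adjacency matrix. -/
noncomputable def lam1 {n : ℕ} (G : SimpleGraph (Fin n)) : ℝ := by
  classical
  exact sSup {μ : ℝ | Module.End.HasEigenvalue (Matrix.toLin' (G.adjMatrix ℝ)) μ}

/-- The number of edges of a graph on a finite vertex type. -/
noncomputable def edgeCount {V : Type*} [Fintype V] (G : SimpleGraph V) : ℕ := by
  classical
  exact G.edgeFinset.card

/-- The degree of a vertex. -/
noncomputable def deg {n : ℕ} (G : SimpleGraph (Fin n)) (v : Fin n) : ℕ := by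
  classical
  exact G.degree v

/-- The number of neighbours of `v` inside the set `A`. -/
noncomputable def degIn {n : ℕ} (G : SimpleGraph (Fin n)) (A : Finset (Fin n)) (v : Fin n) : ℕ := by
  classical
  exact (A.filter fun u => G.Adj v u).card

/-- The number of edges of `G` with one endpoint in `S` and the other outside `S`. -/
noncomputable def cutCount {n : ℕ} (G : SimpleGraph (Fin n)) (S : Finset (Fin n)) : ℕ := by
  classical
  exact ((Finset.univ : Finset (Fin n × Fin n)).filter
    fun p => G.Adj p.1 p.2 ∧ p.1 ∈ S ∧ p.2 ∉ S).card

/-- `(S, T)` is a maximum cut of `G`. -/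
def IsMaxCut {n : ℕ} (G : SimpleGraph (Fin n)) (S T : Finset (Fin n)) : Prop :=
  T = Sᶜ ∧ ∀ S' : Finset (Fin n), cutCount G S' ≤ cutCount G S

/-- `G` attains the maximum spectral radius among all `n`-vertex `W_t`-free graphs. -/
def IsSpexWheel (t : ℕ) {n : ℕ} (G : SimpleGraph (Fin n)) : Prop :=
  WheelFree t G ∧ ∀ H : SimpleGraph (Fin n), WheelFree t H → lam1 H ≤ lam1 G

/-- `G` attains the maximum number of edges among all `n`-vertex `W_t`-free graphs. -/
def IsExWheel (t : ℕ) {n : ℕ} (G : SimpleGraph (Fin n)) : Prop :=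
  WheelFree t G ∧ ∀ H : SimpleGraph (Fin n), WheelFree t H → edgeCount H ≤ edgeCount G

/-!
The sides of a maximum cut `L ⊔ R` of an extremal graph `G` are almost completely joined. So any few
vertices of `L` have many common neighbours in `R`, which makes all internal degrees less than `k`,
and the Perron vector is nearly constant, so that exchanging few edges changes the spectral radius
essentially by the number of edges gained.
A vertex of internal degree `k - 1` limits the edges inside `R`, so comparing `G` with a complete
bipartite graph that has cliques `K_k` on one side shows that some vertex of `L` of internal degree
`k - 1`, and its neighbours in `L`, are adjacent to all of `R`. Two edges inside `R` would then
give a wheel with that vertex as hub.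

Suppose `u ∈ L` and `r ∈ R` are not adjacent. Adding `ur` must create a wheel, so `R` contains
an edge `e` and `L` a path on `2k - 1` vertices; deleting `e` pays for one new edge but not for
two, so `ur` is the only missing pair, and then the hubs at `e` force every such path to end at `u`.
Hence no cycle of length `2k` appears in `L` however the edges at `u` are changed, and `u` has a
single neighbour in `L`, so edges from `u` to interior vertices of a path can be added profitably.
-/

open Finset

section Wheels

variable {V : Type*} {G H : SimpleGraph V} {S T : Set V} {m : ℕ}

/-- `l` lists the successive vertices of a path of `G` with all its vertices in `S`. -/
structure IsPathIn (G : SimpleGraph V) (S : Set V) (l : List V) : Prop where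
  nodup : l.Nodup
  isChain : l.IsChain G.Adj
  mem : ∀ x ∈ l, x ∈ S

/-- `f` lists the successive vertices of a cycle of length `m` of `G` with all its vertices in `S`;
the positions are integers modulo `m`, so that `i + 1` is the position after `i` also at the end. -/
structure IsCycleIn (G : SimpleGraph V) (S : Set V) (f : ZMod m → V) : Prop where
  injective : Function.Injective f
  adj : ∀ i, G.Adj (f i) (f (i + 1))
  mem : ∀ i, f i ∈ S

namespace IsPathIn

variable {l : List V} {a b : V}

lemma mono (hl : IsPathIn G S l) (hST : S ⊆ T)
    (hGH : ∀ x ∈ S, ∀ y ∈ S, G.Adj x y → H.Adj x y) : IsPathIn H T l where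
  nodup := hl.nodup
  isChain := hl.isChain.imp_of_mem_imp fun x y hx hy => hGH x (hl.mem x hx) y (hl.mem y hy)
  mem x hx := hST (hl.mem x hx)

lemma subset (hl : IsPathIn G S l) (hT : ∀ x ∈ l, x ∈ T) : IsPathIn G T l where
  nodup := hl.nodup
  isChain := hl.isChain
  mem := hT

lemma reverse (hl : IsPathIn G S l) : IsPathIn G S l.reverse where
  nodup := List.nodup_reverse.2 hl.nodup
  isChain := List.isChain_reverse.2 (hl.isChain.imp fun _ _ h => h.symm)
  mem x hx := hl.mem x (List.mem_reverse.1 hx)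

lemma singleton (ha : a ∈ S) : IsPathIn G S [a] where
  nodup := List.nodup_singleton a
  isChain := List.isChain_singleton a
  mem := by simpa using ha

lemma cons (hl : IsPathIn G S (b :: l)) (hab : G.Adj a b) (ha : a ∈ S) (hal : a ∉ b :: l) :
    IsPathIn G S (a :: b :: l) where
  nodup := List.nodup_cons.2 ⟨hal, hl.nodup⟩
  isChain := List.isChain_cons_cons.2 ⟨hab, hl.isChain⟩
  mem := List.forall_mem_cons.2 ⟨ha, hl.mem⟩

lemma exists_isCycleIn (hl : IsPathIn G S l) (hne : l ≠ [])
    (hclose : G.Adj (l.getLast hne) (l.head hne)) (hm : l.length = m) :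
    ∃ f : ZMod m → V, IsCycleIn G S f := by
  subst hm
  have : NeZero l.length := ⟨by simpa using hne⟩
  refine ⟨fun i => l[i.val]'i.val_lt, ⟨fun i j hij => ?_, fun i => ?_, fun i => ?_⟩⟩
  · exact ZMod.val_injective _ ((List.Nodup.getElem_inj_iff hl.nodup).1 hij)
  · have hsucc : (i + 1).val = (i.val + 1) % l.length := by
      rw [ZMod.val_add, ZMod.val_one_eq_one_mod, Nat.add_mod_mod]
    rcases (show i.val + 1 ≤ l.length from i.val_lt).lt_or_eq with hi | hi
    · simp only [hsucc, Nat.mod_eq_of_lt hi]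
      exact List.isChain_iff_getElem.1 hl.isChain _ hi
    · have hlast : i.val = l.length - 1 := by omega
      rw [hi, Nat.mod_self] at hsucc
      simpa only [hsucc, hlast, List.getLast_eq_getElem, List.head_eq_getElem] using hclose
  · exact hl.mem _ (List.getElem_mem _)

lemma exists_zigzag {A X : Finset V} (hA : ↑A ⊆ S) (hX : ↑X ⊆ S)
    (hAX : ∀ a ∈ A, ∀ x ∈ X, G.Adj a x) {x : V} {P : List V} (hP : IsPathIn G S (x :: P))
    (hx : x ∈ X) (hAP : ∀ a ∈ A, a ∉ x :: P) (hcard : P.length + 2 * #A < #X) :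
    ∃ y ∈ X, ∃ Q, IsPathIn G S (y :: Q) ∧ Q.length = P.length + 2 * #A ∧
      (y :: Q).getLast (List.cons_ne_nil y Q) = (x :: P).getLast (List.cons_ne_nil x P) := by
  classical
  induction A using Finset.induction_on generalizing x P with
  | empty => exact ⟨x, hx, P, hP, by simp, rfl⟩
  | insert a A haA ih =>
    simp only [card_insert_of_notMem haA, coe_insert, Set.insert_subset_iff,
      forall_mem_insert] at hA hAX hAP hcard
    obtain ⟨s, hsX, hsP⟩ : ∃ s ∈ X, s ∉ (x :: P).toFinset := by
      refine exists_mem_notMem_of_card_lt_card ((List.toFinset_card_le _).trans_lt ?_)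
      rw [List.length_cons]
      omega
    rw [List.mem_toFinset] at hsP
    have has : G.Adj a s := hAX.1 s hsX
    have hsaP : s ∉ a :: x :: P := fun h => (List.mem_cons.1 h).elim (fun h => has.ne h.symm) hsP
    obtain ⟨y, hyX, Q, hQ, hlen, hlast⟩ :=
      ih hA.2 hAX.2 ((hP.cons (hAX.1 x hx) hA.1 hAP.1).cons has.symm (hX hsX) hsaP) hsX
        (fun b hb => by
          simp only [List.mem_cons, not_or]
          exact ⟨(hAX.2 b hb s hsX).ne, ne_of_mem_of_not_mem hb haA,
            List.mem_cons.not.1 (hAP.2 b hb) |> not_or.1⟩)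
        (by simp only [List.length_cons]; omega)
    refine ⟨y, hyX, Q, hQ, ?_, by simpa using hlast⟩
    simp only [hlen, List.length_cons, card_insert_of_notMem haA]
    omega

end IsPathIn

namespace IsCycleIn

variable {f : ZMod m → V}

lemma exists_isPathIn_diff (hf : IsCycleIn G S f) (i₀ : ZMod m) :
    ∃ l : List V, l.length = m - 1 ∧ IsPathIn G (S \ {f i₀}) l := by
  have hcast {i j : ℕ} (hi : i < m) (hj : j < m) (h : (i : ZMod m) = j) : i = j := by
    simpa only [ZMod.natCast_eq_natCast_iff', Nat.mod_eq_of_lt hi, Nat.mod_eq_of_lt hj] using h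
  refine ⟨(List.range (m - 1)).map fun j => f (i₀ + (j + 1 : ℕ)), by simp, ?_, ?_, ?_⟩
  · refine List.Nodup.map_on (fun i hi j hj hij => ?_) List.nodup_range
    rw [List.mem_range] at hi hj
    have := hcast (by omega) (by omega) (add_left_cancel (hf.injective hij))
    omega
  · rw [List.isChain_map, List.isChain_range]
    intro j _
    convert hf.adj (i₀ + (j + 1 : ℕ)) using 2
    push_cast
    ring
  · intro x hx
    obtain ⟨j, hj, rfl⟩ := List.mem_map.1 hx
    rw [List.mem_range] at hj
    refine ⟨hf.mem _, fun h => ?_⟩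
    have hzero : ((j + 1 : ℕ) : ZMod m) = (0 : ℕ) := by
      simpa using (hf.injective h : i₀ + ((j + 1 : ℕ) : ZMod m) = i₀)
    have := hcast (by omega) (by omega) hzero
    omega

lemma edge_injective (hm : 2 < m) (hf : IsCycleIn G S f) :
    Function.Injective fun i => s(f i, f (i + 1)) := by
  intro i j hij
  rcases Sym2.eq_iff.1 hij with ⟨h, -⟩ | ⟨h, h'⟩
  · exact hf.injective h
  · have htwo : ((2 : ℕ) : ZMod m) = (0 : ℕ) := by
      have : j + 1 + 1 = j := (congrArg (· + 1) (hf.injective h)).symm.trans (hf.injective h')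
      push_cast
      linear_combination this
    rw [ZMod.natCast_eq_natCast_iff', Nat.mod_eq_of_lt hm, Nat.zero_mod] at htwo
    exact absurd htwo two_ne_zero

end IsCycleIn

lemma wheelGraph_adj_zero_succ (i : Fin m) : (wheelGraph (m + 1)).Adj 0 i.succ :=
  ⟨(Fin.succ_ne_zero i).symm, Or.inl rfl⟩

lemma wheelGraph_adj_succ_succ {i j : Fin m} :
    (wheelGraph (m + 1)).Adj i.succ j.succ ↔
      i ≠ j ∧ (((i : ℕ) : ZMod m) + 1 = (j : ℕ) ∨ ((j : ℕ) : ZMod m) + 1 = (i : ℕ)) := by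
  have hcast (i j : Fin m) : ((i : ℕ) : ZMod m) + 1 = (j : ℕ) ↔
      (i : ℕ) + 1 = j ∨ ((i : ℕ) + 1 = m ∧ (j : ℕ) = 0) := by
    rw [← Nat.cast_succ, ZMod.natCast_eq_natCast_iff', Nat.mod_eq_of_lt j.2]
    rcases (show (i : ℕ) + 1 ≤ m from i.2).lt_or_eq with h | h
    · rw [Nat.mod_eq_of_lt h]
      omega
    · rw [Nat.succ_eq_add_one, h, Nat.mod_self]
      omega
  have hi := i.2
  have hj := j.2
  simp only [wheelGraph, ne_eq, Fin.succ_inj, Fin.val_succ, hcast]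
  omega

theorem containsCopy_wheelGraph_iff (hm : 2 ≤ m) :
    ContainsCopy (wheelGraph (m + 1)) G ↔
      ∃ c, ∃ f : ZMod m → V, IsCycleIn G (G.neighborSet c) f := by
  have : Fact (1 < m) := ⟨by omega⟩
  constructor
  · rintro ⟨φ, hφ⟩
    refine ⟨φ 0, fun i => φ (Fin.succ ⟨i.val, i.val_lt⟩), ⟨fun i j hij => ?_, fun i => ?_,
      fun i => hφ _ _ (wheelGraph_adj_zero_succ _)⟩⟩
    · exact ZMod.val_injective m (by simpa using φ.injective hij)
    · refine hφ _ _ (wheelGraph_adj_succ_succ.2 ⟨fun h => ?_, Or.inl (by simp)⟩)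
      exact succ_ne_self i (ZMod.val_injective m (congrArg Fin.val h)).symm
  · rintro ⟨c, f, hf⟩
    let φ : Fin (m + 1) → V := Fin.cons c fun i => f (i : ℕ)
    have hφ : ∀ a b, (wheelGraph (m + 1)).Adj a b → G.Adj (φ a) (φ b) := by
      intro a b
      refine a.cases ?_ fun i => ?_ <;> refine b.cases ?_ fun j => ?_ <;> intro h
      · exact absurd rfl h.1
      · exact hf.mem _
      · exact (hf.mem _ : G.Adj c _).symm
      · rcases (wheelGraph_adj_succ_succ.1 h).2 with h | h
        · simpa [φ, h] using hf.adj (i : ℕ)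
        · simpa [φ, h] using (hf.adj (j : ℕ)).symm
    refine ⟨⟨φ, Fin.cons_injective_iff.2 ⟨?_, fun i j hij => ?_⟩⟩, hφ⟩
    · rintro ⟨i, rfl⟩
      exact G.irrefl (hf.mem _)
    · have := hf.injective hij
      rw [ZMod.natCast_eq_natCast_iff', Nat.mod_eq_of_lt i.2, Nat.mod_eq_of_lt j.2] at this
      exact Fin.ext this

/-- The rim runs through `P` and then alternately through `A` and `X`. -/
theorem containsCopy_wheelGraph_of_path (hm : 2 ≤ m) {c x : V} {A X : Finset V} {P : List V}
    (hP : IsPathIn G (G.neighborSet c) (x :: P)) (hx : x ∈ X)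
    (hlast : (x :: P).getLast (List.cons_ne_nil x P) ∈ X)
    (hA : ↑A ⊆ G.neighborSet c) (hX : ↑X ⊆ G.neighborSet c) (hAX : ∀ a ∈ A, ∀ x ∈ X, G.Adj a x)
    (hAP : ∀ a ∈ A, a ∉ x :: P) (hAne : A.Nonempty) (hlen : P.length + 2 * #A = m)
    (hcard : m ≤ #X) : ContainsCopy (wheelGraph (m + 1)) G := by
  classical
  obtain ⟨a, ha⟩ := hAne
  have hpos := card_pos.2 ⟨a, ha⟩
  have haX {y : V} (hy : y ∈ X) : G.Adj a y := hAX a ha y hy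
  obtain ⟨y, hyX, Q, hQ, hQlen, hQlast⟩ :=
    IsPathIn.exists_zigzag (A := A.erase a) (X := X) (S := G.neighborSet c \ {a})
      (fun b hb => ⟨hA (mem_of_mem_erase hb), ne_of_mem_erase hb⟩)
      (fun z hz => ⟨hX hz, fun h => (haX hz).ne h.symm⟩)
      (fun b hb => hAX b (mem_of_mem_erase hb))
      (hP.subset fun z hz => ⟨hP.mem z hz, fun h => hAP a ha (h ▸ hz)⟩)
      hx (fun b hb => hAP b (mem_of_mem_erase hb))
      (by rw [card_erase_of_mem ha]; omega)
  have hrim : IsPathIn G (G.neighborSet c) (a :: y :: Q) :=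
    (hQ.subset fun z hz => (hQ.mem z hz).1).cons (haX hyX) (hA ha) fun h => (hQ.mem a h).2 rfl
  rw [card_erase_of_mem ha] at hQlen
  obtain ⟨f, hf⟩ := hrim.exists_isCycleIn (m := m) (List.cons_ne_nil _ _)
    (by
      rw [List.getLast_cons (List.cons_ne_nil y Q), hQlast]
      exact (haX hlast).symm)
    (by simp only [List.length_cons, hQlen]; omega)
  exact (containsCopy_wheelGraph_iff hm).2 ⟨c, f, hf⟩

end Wheels

section WheelFree

variable {V : Type*} {G : SimpleGraph V} {k : ℕ}

theorem containsCopy_wheelGraph_of_biclique (hk : 0 < k) {c : V} {A X : Finset V} (hA : k ≤ #A)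
    (hX : 2 * k ≤ #X) (hAX : ∀ a ∈ A, ∀ x ∈ X, G.Adj a x) (hcA : ∀ a ∈ A, G.Adj c a)
    (hcX : ∀ x ∈ X, G.Adj c x) : ContainsCopy (wheelGraph (2 * k + 1)) G := by
  obtain ⟨B, hBA, hB⟩ := exists_subset_card_eq hA
  obtain ⟨x, hx⟩ : X.Nonempty := card_pos.1 (by omega)
  exact containsCopy_wheelGraph_of_path (P := []) (by omega) (.singleton (hcX x hx)) hx hx
    (fun a ha => hcA a (hBA ha)) hcX (fun a ha => hAX a (hBA ha))
    (fun a ha h => (hAX a (hBA ha) x hx).ne (List.mem_singleton.1 h))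
    (card_pos.1 (by omega)) (by simp [hB]) hX

lemma one_lt_card_not_and_not_succ [NeZero (2 * k)] (p : ZMod (2 * k) → Prop) [DecidablePred p]
    (hp : #{i | p i} < k) : 1 < #{i | ¬ p i ∧ ¬ p (i + 1)} := by
  have hnot : #{i | ¬ p i} = #{i | ¬ p i ∧ p (i + 1)} + #{i | ¬ p i ∧ ¬ p (i + 1)} := by
    rw [← card_filter_add_card_filter_not (s := {i | ¬ p i}) fun i => p (i + 1), filter_filter,
      filter_filter]
  have hsucc : #{i | ¬ p i ∧ p (i + 1)} ≤ #{i | p i} :=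
    card_le_card_of_injOn (· + 1) (fun i hi => by simp_all)
      (add_left_injective (1 : ZMod (2 * k))).injOn
  have huniv : #{i | p i} + #{i | ¬ p i} = 2 * k := by
    rw [card_filter_add_card_filter_not, card_univ, ZMod.card]
  omega

variable {n : ℕ} {G : SimpleGraph (Fin n)} {L : Finset (Fin n)} {e : Sym2 (Fin n)}

lemma card_filter_adj_eq_degIn [DecidableRel G.Adj] (A : Finset (Fin n)) (v : Fin n) :
    #{u ∈ A | G.Adj v u} = degIn G A v := by
  unfold degIn
  congr

lemma not_isCycleIn_neighborSet (hk : 2 ≤ k) {c : Fin n} (hdeg : degIn G L c < k)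
    (he : ∀ x ∉ L, ∀ y ∉ L, G.Adj x y → s(x, y) = e) (f : ZMod (2 * k) → Fin n) :
    ¬ IsCycleIn G (G.neighborSet c) f := by
  classical
  intro hf
  have : NeZero (2 * k) := ⟨by omega⟩
  refine (one_lt_card_not_and_not_succ (fun i => f i ∈ L) (lt_of_le_of_lt ?_ hdeg)).not_ge ?_
  · rw [← card_filter_adj_eq_degIn]
    exact card_le_card_of_injOn f (fun i hi => by simpa using ⟨by simpa using hi, hf.mem i⟩)
      hf.injective.injOn
  · refine card_le_one.2 fun i hi j hj => hf.edge_injective (by omega) ?_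
    simp only [mem_filter, mem_univ, true_and] at hi hj
    exact (he _ hi.1 _ hi.2 (hf.adj i)).trans (he _ hj.1 _ hj.2 (hf.adj j)).symm

theorem wheelFree_of_forall_not_isPathIn (hk : 2 ≤ k) (hdeg : ∀ u ∈ L, degIn G L u < k)
    (he : ∀ x ∉ L, ∀ y ∉ L, G.Adj x y → s(x, y) = e)
    (hpath : ∀ l : List (Fin n), l.length = 2 * k - 1 → ¬ IsPathIn G L l) :
    WheelFree (2 * k + 1) G := by
  intro hcopy
  obtain ⟨c, f, hf⟩ := (containsCopy_wheelGraph_iff (by omega)).1 hcopy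
  by_cases hcL : c ∈ L
  · exact not_isCycleIn_neighborSet hk (hdeg c hcL) he f hf
  obtain ⟨i₀, hi₀⟩ : ∃ i₀, ∀ i, f i ∉ L → f i = f i₀ := by
    by_cases h : ∃ i₀, f i₀ ∉ L
    · obtain ⟨i₀, hi₀⟩ := h
      exact ⟨i₀, fun i hi => Sym2.congr_right.1
        ((he c hcL _ hi (hf.mem i)).trans (he c hcL _ hi₀ (hf.mem i₀)).symm)⟩
    · exact ⟨0, fun i hi => absurd ⟨i, hi⟩ h⟩
  have hfL : IsCycleIn G (L ∪ {f i₀}) f :=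
    ⟨hf.injective, hf.adj, fun i => or_iff_not_imp_left.2 (hi₀ i)⟩
  obtain ⟨l, hlen, hl⟩ := hfL.exists_isPathIn_diff i₀
  exact hpath l hlen (hl.subset fun x hx => (hl.mem x hx).1.resolve_right (hl.mem x hx).2)

theorem wheelFree_of_forall_not_isCycleIn (hk : 2 ≤ k) (hdeg : ∀ u ∈ L, degIn G L u < k)
    (hindep : ∀ x ∉ L, ∀ y ∉ L, ¬ G.Adj x y)
    (hcyc : ∀ f : ZMod (2 * k) → Fin n, ¬ IsCycleIn G L f) : WheelFree (2 * k + 1) G := by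
  intro hcopy
  obtain ⟨c, f, hf⟩ := (containsCopy_wheelGraph_iff (by omega)).1 hcopy
  by_cases hcL : c ∈ L
  · exact not_isCycleIn_neighborSet (e := s(c, c)) hk (hdeg c hcL)
      (fun x hx y hy h => absurd h (hindep x hx y hy)) f hf
  · exact hcyc f ⟨hf.injective, hf.adj, fun i => by_contra fun h => hindep c hcL _ h (hf.mem i)⟩

end WheelFree

section Rewiring

variable {V : Type*} {G : SimpleGraph V} {w : V} {T : Set V}

/-- The graph `G` with the neighbourhood of the vertex `w` replaced by `T \ {w}`. -/
def rewire (G : SimpleGraph V) (w : V) (T : Set V) : SimpleGraph V :=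
  G.deleteIncidenceSet w ⊔ SimpleGraph.fromRel fun x y => x = w ∧ y ∈ T

lemma rewire_adj_left {y : V} : (rewire G w T).Adj w y ↔ y ≠ w ∧ y ∈ T := by
  simp only [rewire, SimpleGraph.sup_adj, SimpleGraph.deleteIncidenceSet_adj,
    SimpleGraph.fromRel_adj]
  grind

lemma rewire_adj_of_ne {x y : V} (hx : x ≠ w) (hy : y ≠ w) :
    (rewire G w T).Adj x y ↔ G.Adj x y := by
  simp only [rewire, SimpleGraph.sup_adj, SimpleGraph.deleteIncidenceSet_adj,
    SimpleGraph.fromRel_adj]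
  grind

/-- In a copy of `F` the vertex `w` can be replaced by a common neighbour, in `G`, of those of its
vertices that lie in `T`. -/
lemma ContainsCopy.of_rewire {α : Type*} [Fintype α] {F : SimpleGraph α}
    (hF : ContainsCopy F (rewire G w T))
    (hT : ∀ U : Finset V, #U ≤ Fintype.card α → ∃ w' ∉ U, ∀ y ∈ U, y ∈ T → G.Adj w' y) :
    ContainsCopy F G := by
  classical
  obtain ⟨φ, hφ⟩ := hF
  obtain ⟨w', hw', hadj⟩ := hT (univ.image φ) card_image_le
  have hw'φ : ∀ a, φ a ≠ w' := fun a h => hw' (h ▸ mem_image_of_mem φ (mem_univ a))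
  have hadjφ (b : α) (h : (rewire G w T).Adj w (φ b)) : G.Adj w' (φ b) :=
    hadj _ (mem_image_of_mem φ (mem_univ b)) (rewire_adj_left.1 h).2
  refine ⟨⟨fun a => if φ a = w then w' else φ a, fun a b hab => φ.injective ?_⟩, fun a b hab => ?_⟩
  · grind
  · have h := hφ a b hab
    change G.Adj (if φ a = w then w' else φ a) (if φ b = w then w' else φ b)
    split_ifs with ha hb hb
    · exact absurd (ha.trans hb.symm) h.ne
    · exact hadjφ b (ha ▸ h)
    · exact (hadjφ a (hb ▸ h.symm)).symm
    · exact (rewire_adj_of_ne ha hb).1 h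

end Rewiring

section AdjacencyForm

variable {V : Type*} {G H : SimpleGraph V} {x y : V → ℝ}

open Classical in
/-- The sum of the values of `x` at the neighbours of `v` in `A`. -/
noncomputable def nbrSum (G : SimpleGraph V) (x : V → ℝ) (A : Finset V) (v : V) : ℝ :=
  ∑ w ∈ A with G.Adj v w, x w

/-- The quadratic form of the adjacency matrix of `G`; each edge is counted in both directions. -/
noncomputable def adjForm [Fintype V] (G : SimpleGraph V) (x : V → ℝ) : ℝ :=
  ∑ u, x u * nbrSum G x univ u

lemma nbrSum_eq_sum_ite [DecidableRel G.Adj] (x : V → ℝ) (A : Finset V) (v : V) :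
    nbrSum G x A v = ∑ w ∈ A, if G.Adj v w then x w else 0 := by
  rw [nbrSum, sum_filter]
  exact sum_congr rfl fun w _ => by congr

lemma nbrSum_add_nbrSum_compl [Fintype V] [DecidableEq V] (G : SimpleGraph V) (x : V → ℝ)
    (A : Finset V) (v : V) : nbrSum G x A v + nbrSum G x Aᶜ v = nbrSum G x univ v := by
  classical
  simp only [nbrSum_eq_sum_ite, sum_add_sum_compl]

lemma nbrSum_inf_add_nbrSum_sdiff (G H : SimpleGraph V) (x : V → ℝ) (A : Finset V) (v : V) :
    nbrSum (G ⊓ H) x A v + nbrSum (G \ H) x A v = nbrSum G x A v := by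
  classical
  simp only [nbrSum_eq_sum_ite, ← sum_add_distrib, SimpleGraph.inf_adj, SimpleGraph.sdiff_adj]
  refine sum_congr rfl fun w _ => ?_
  by_cases hG : G.Adj v w <;> by_cases hH : H.Adj v w <;> simp [hG, hH]

variable [Fintype V]

lemma nbrSum_univ_eq_mulVec [DecidableRel G.Adj] (x : V → ℝ) :
    nbrSum G x univ = (G.adjMatrix ℝ).mulVec x := by
  ext v
  rw [SimpleGraph.adjMatrix_mulVec_apply, nbrSum, SimpleGraph.neighborFinset_eq_filter]
  congr

lemma adjForm_inf_add_adjForm_sdiff (G H : SimpleGraph V) (x : V → ℝ) :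
    adjForm (G ⊓ H) x + adjForm (G \ H) x = adjForm G x := by
  simp only [adjForm, ← nbrSum_inf_add_nbrSum_sdiff G H x, mul_add, sum_add_distrib]

lemma adjForm_le_adjForm (hx : ∀ v, 0 ≤ x v) (hxy : ∀ v, x v ≤ y v) :
    adjForm G x ≤ adjForm G y :=
  sum_le_sum fun u _ => mul_le_mul (hxy u) (sum_le_sum fun w _ => hxy w)
    (sum_nonneg fun w _ => hx w) ((hx u).trans (hxy u))

lemma adjForm_const (G : SimpleGraph V) (c : ℝ) :
    adjForm G (fun _ => c) = c ^ 2 * (2 * edgeCount G) := by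
  classical
  have hcard : (∑ u, #{w | G.Adj u w} : ℝ) = 2 * edgeCount G := by
    have := G.sum_degrees_eq_twice_card_edges
    simp only [← SimpleGraph.card_neighborFinset_eq_degree,
      SimpleGraph.neighborFinset_eq_filter] at this
    unfold edgeCount
    exact_mod_cast this
  rw [← hcard, mul_sum]
  refine sum_congr rfl fun u _ => ?_
  rw [nbrSum, sum_const, nsmul_eq_mul]
  ring

lemma nbrSum_rewire_self {w : V} {T : Finset V} (hw : w ∉ T) :
    nbrSum (rewire G w T) x univ w = ∑ v ∈ T, x v := by
  rw [nbrSum]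
  congr 1
  ext v
  simp only [mem_filter, mem_univ, true_and, rewire_adj_left, mem_coe]
  exact and_iff_right_of_imp fun hv => ne_of_mem_of_not_mem hv hw

lemma nbrSum_rewire_of_ne [DecidableEq V] [DecidableRel G.Adj] {u w : V} {T : Finset V}
    (huw : u ≠ w) : nbrSum (rewire G w T) x univ u =
      nbrSum G x univ u + x w * ((if u ∈ T then 1 else 0) - if G.Adj w u then 1 else 0) := by
  classical
  have hw : (rewire G w T).Adj u w ↔ u ∈ T := by
    rw [SimpleGraph.adj_comm, rewire_adj_left, and_iff_right huw, mem_coe]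
  have herase : ∑ v ∈ univ.erase w, (if (rewire G w T).Adj u v then x v else 0) =
      ∑ v ∈ univ.erase w, if G.Adj u v then x v else 0 :=
    sum_congr rfl fun v hv => by simp only [rewire_adj_of_ne huw (ne_of_mem_erase hv)]
  rw [nbrSum_eq_sum_ite, nbrSum_eq_sum_ite, ← add_sum_erase _ _ (mem_univ w), herase,
    ← add_sum_erase _ _ (mem_univ w)]
  simp only [hw, G.adj_comm w u]
  split_ifs <;> ring

lemma adjForm_rewire {w : V} {T : Finset V} (hw : w ∉ T) :
    adjForm (rewire G w T) x =
      adjForm G x + 2 * (x w * (∑ v ∈ T, x v - nbrSum G x univ w)) := by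
  classical
  have hterm (u : V) : x u * nbrSum (rewire G w T) x univ u = x u * nbrSum G x univ u +
      (if u = w then x w * (∑ v ∈ T, x v - nbrSum G x univ w) else 0) +
      x w * ((if u ∈ T then x u else 0) - if G.Adj w u then x u else 0) := by
    obtain rfl | huw := eq_or_ne u w
    · simp only [nbrSum_rewire_self hw, hw, G.irrefl, if_true, if_false]
      ring
    · rw [nbrSum_rewire_of_ne huw, if_neg huw]
      split_ifs <;> ring
  simp only [adjForm, hterm, sum_add_distrib, ← mul_sum, sum_sub_distrib, sum_ite_eq', mem_univ,
    if_true, sum_ite_mem, univ_inter, ← nbrSum_eq_sum_ite]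
  ring

end AdjacencyForm

section SpectralRadius

variable {n : ℕ} {G H : SimpleGraph (Fin n)} {x : Fin n → ℝ}

lemma isGreatest_lam1 [NeZero n] (G : SimpleGraph (Fin n)) [DecidableRel G.Adj] :
    IsGreatest {μ | Module.End.HasEigenvalue (Matrix.toLin' (G.adjMatrix ℝ)) μ} (lam1 G) := by
  have hlam : lam1 G = sSup {μ | Module.End.HasEigenvalue (Matrix.toLin' (G.adjMatrix ℝ)) μ} := by
    unfold lam1
    congr!
  have hfin := Module.End.finite_hasEigenvalue (Matrix.toLin' (G.adjMatrix ℝ))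
  have hA := SimpleGraph.isHermitian_adjMatrix ℝ G
  have hne : {μ | Module.End.HasEigenvalue (Matrix.toLin' (G.adjMatrix ℝ)) μ}.Nonempty :=
    ⟨_, Module.End.hasEigenvalue_of_hasEigenvector
      ⟨Module.End.mem_eigenspace_iff.2 (hA.mulVec_eigenvectorBasis 0),
        (WithLp.ofLp_eq_zero 2).not.2 (hA.eigenvectorBasis.orthonormal.ne_zero 0)⟩⟩
  rw [hlam]
  exact ⟨hne.csSup_mem hfin, fun μ hμ => le_csSup hfin.bddAbove hμ⟩

open Matrix in
lemma posSemidef_lam1_smul_one_sub_adjMatrix [NeZero n] (G : SimpleGraph (Fin n))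
    [DecidableRel G.Adj] : (lam1 G • 1 - G.adjMatrix ℝ).PosSemidef := by
  have hB : (lam1 G • 1 - G.adjMatrix ℝ).IsHermitian :=
    (isHermitian_one.smul (IsSelfAdjoint.all _)).sub (SimpleGraph.isHermitian_adjMatrix ℝ G)
  refine hB.posSemidef_iff_eigenvalues_nonneg.2 fun i => ?_
  have heig := hB.mulVec_eigenvectorBasis i
  rw [sub_mulVec, smul_mulVec, one_mulVec] at heig
  have hle := (isGreatest_lam1 G).2 (Module.End.hasEigenvalue_of_hasEigenvector
    (μ := lam1 G - hB.eigenvalues i) (x := (hB.eigenvectorBasis i).ofLp)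
    ⟨Module.End.mem_eigenspace_iff.2 (by
        rw [toLin'_apply, sub_smul, ← heig, sub_sub_cancel]),
      (WithLp.ofLp_eq_zero 2).not.2 (hB.eigenvectorBasis.orthonormal.ne_zero i)⟩)
  simpa using hle

open Matrix in
lemma dotProduct_lam1_smul_one_sub_adjMatrix [DecidableRel G.Adj] (x : Fin n → ℝ) :
    star x ⬝ᵥ (lam1 G • 1 - G.adjMatrix ℝ) *ᵥ x = lam1 G * ∑ v, x v ^ 2 - adjForm G x := by
  rw [sub_mulVec, smul_mulVec, one_mulVec, dotProduct_sub, dotProduct_smul, smul_eq_mul,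
    ← nbrSum_univ_eq_mulVec]
  simp only [dotProduct, star_trivial, adjForm, pow_two]

lemma adjForm_le_lam1_mul [NeZero n] (G : SimpleGraph (Fin n)) (x : Fin n → ℝ) :
    adjForm G x ≤ lam1 G * ∑ v, x v ^ 2 := by
  classical
  have := (posSemidef_lam1_smul_one_sub_adjMatrix G).dotProduct_mulVec_nonneg x
  rwa [dotProduct_lam1_smul_one_sub_adjMatrix, sub_nonneg] at this

lemma nbrSum_univ_eq_of_le_adjForm [NeZero n] (hx : lam1 G * ∑ v, x v ^ 2 ≤ adjForm G x)
    (u : Fin n) : nbrSum G x univ u = lam1 G * x u := by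
  classical
  have hzero := ((posSemidef_lam1_smul_one_sub_adjMatrix G).dotProduct_mulVec_zero_iff x).1 (by
    rw [dotProduct_lam1_smul_one_sub_adjMatrix, (adjForm_le_lam1_mul G x).antisymm hx, sub_self])
  rw [Matrix.sub_mulVec, Matrix.smul_mulVec, Matrix.one_mulVec, sub_eq_zero] at hzero
  rw [nbrSum_univ_eq_mulVec, ← hzero, Pi.smul_apply, smul_eq_mul]

lemma two_mul_edgeCount_le_lam1_mul [NeZero n] (G : SimpleGraph (Fin n)) :
    (2 * edgeCount G : ℝ) ≤ lam1 G * n := by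
  simpa [adjForm_const] using adjForm_le_lam1_mul G fun _ => 1

/-- `x` is a nonnegative eigenvector of `G` for the spectral radius, scaled to have maximum
entry `1`. -/
structure IsPerronVector (G : SimpleGraph (Fin n)) (x : Fin n → ℝ) : Prop where
  nonneg : ∀ v, 0 ≤ x v
  le_one : ∀ v, x v ≤ 1
  exists_eq_one : ∃ z, x z = 1
  nbrSum_univ : ∀ v, nbrSum G x univ v = lam1 G * x v

theorem exists_isPerronVector [NeZero n] (G : SimpleGraph (Fin n)) :
    ∃ x, IsPerronVector G x := by
  classical
  obtain ⟨v, hv, hv0⟩ := (isGreatest_lam1 G).1.exists_hasEigenvector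
  rw [Module.End.mem_eigenspace_iff, Matrix.toLin'_apply, ← nbrSum_univ_eq_mulVec] at hv
  have hform : lam1 G * ∑ u, |v u| ^ 2 ≤ adjForm G fun u => |v u| := by
    rw [mul_sum]
    refine sum_le_sum fun u _ => ?_
    calc lam1 G * |v u| ^ 2 = v u * nbrSum G v univ u := by
          rw [hv, Pi.smul_apply, smul_eq_mul, sq_abs]
          ring
      _ ≤ |v u * nbrSum G v univ u| := le_abs_self _
      _ ≤ |v u| * nbrSum G (fun u => |v u|) univ u := by
          rw [abs_mul]
          exact mul_le_mul_of_nonneg_left (abs_sum_le_sum_abs _ _) (abs_nonneg _)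
  obtain ⟨z, hz⟩ := Finite.exists_max fun u => |v u|
  have hzpos : 0 < |v z| := by
    obtain ⟨u, hu⟩ := Function.ne_iff.1 hv0
    exact (abs_pos.2 hu).trans_le (hz u)
  refine ⟨fun u => |v u| / |v z|, fun u => by positivity, fun u => (div_le_one hzpos).2 (hz u),
    ⟨z, div_self hzpos.ne'⟩, fun u => ?_⟩
  have := nbrSum_univ_eq_of_le_adjForm hform u
  simp only [nbrSum, ← sum_div] at this ⊢
  rw [this, mul_div_assoc]

namespace IsPerronVector

lemma neZero (hx : IsPerronVector G x) : NeZero n :=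
  ⟨fun h => by subst h; exact hx.exists_eq_one.elim fun z _ => z.elim0⟩

lemma adjForm_eq (hx : IsPerronVector G x) : adjForm G x = lam1 G * ∑ v, x v ^ 2 := by
  simp only [adjForm, hx.nbrSum_univ, mul_sum]
  exact sum_congr rfl fun v _ => by ring

/-- At the Perron vector of `G` the form of the rewired graph is at least as large as that of `G`,
so if the spectral radius did not grow, the vector would be an eigenvector of both graphs. -/
theorem lam1_lt_lam1_rewire (hx : IsPerronVector G x) {w : Fin n} {T : Finset (Fin n)}
    (hw : w ∉ T) (hT : lam1 G * x w < ∑ v ∈ T, x v) : lam1 G < lam1 (rewire G w T) := by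
  have := hx.neZero
  by_contra! hle
  have hmax : lam1 (rewire G w T) * ∑ v, x v ^ 2 ≤ adjForm (rewire G w T) x := calc
    lam1 (rewire G w T) * ∑ v, x v ^ 2 ≤ lam1 G * ∑ v, x v ^ 2 := by gcongr
    _ ≤ lam1 G * ∑ v, x v ^ 2 + 2 * (x w * (∑ v ∈ T, x v - lam1 G * x w)) := by
      have := mul_nonneg (hx.nonneg w) (sub_nonneg.2 hT.le)
      linarith
    _ = adjForm (rewire G w T) x := by
      rw [adjForm_rewire hw, hx.adjForm_eq, hx.nbrSum_univ]
  have heig := nbrSum_univ_eq_of_le_adjForm hmax w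
  rw [nbrSum_rewire_self hw] at heig
  have := mul_le_mul_of_nonneg_right hle (hx.nonneg w)
  linarith

end IsPerronVector

theorem IsSpexWheel.edgeCount_sdiff_le {t : ℕ} (hG : IsSpexWheel t G) (hx : IsPerronVector G x)
    (hxv : ∀ v, 19 / 20 ≤ x v) (hH : WheelFree t H) :
    9 * edgeCount (H \ G) ≤ 10 * edgeCount (G \ H) := by
  have := hx.neZero
  have hle : adjForm H x ≤ adjForm G x := calc
    adjForm H x ≤ lam1 H * ∑ v, x v ^ 2 := adjForm_le_lam1_mul H x
    _ ≤ lam1 G * ∑ v, x v ^ 2 := by gcongr; exact hG.2 H hH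
    _ = adjForm G x := hx.adjForm_eq.symm
  have hnew : (19 / 20 : ℝ) ^ 2 * (2 * edgeCount (H \ G)) ≤ adjForm (H \ G) x :=
    (adjForm_const _ _).symm.trans_le (adjForm_le_adjForm (by norm_num) hxv)
  have hold : adjForm (G \ H) x ≤ 1 ^ 2 * (2 * edgeCount (G \ H)) :=
    (adjForm_le_adjForm hx.nonneg hx.le_one).trans_eq (adjForm_const _ _)
  rw [← adjForm_inf_add_adjForm_sdiff G H, ← adjForm_inf_add_adjForm_sdiff H G,
    inf_comm H G] at hle
  have : (9 * edgeCount (H \ G) : ℝ) ≤ 10 * edgeCount (G \ H) := by linarith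
  exact_mod_cast this

end SpectralRadius

section DegIn

variable {n k : ℕ} {G H : SimpleGraph (Fin n)} {A B : Finset (Fin n)}

lemma degIn_le_card (G : SimpleGraph (Fin n)) (A : Finset (Fin n)) (v : Fin n) :
    degIn G A v ≤ #A := by
  classical
  exact card_filter_adj_eq_degIn (G := G) A v ▸ card_filter_le _ _

lemma degIn_mono (G : SimpleGraph (Fin n)) (hAB : A ⊆ B) (v : Fin n) :
    degIn G A v ≤ degIn G B v := by
  classical
  simp only [← card_filter_adj_eq_degIn]
  exact card_le_card (filter_subset_filter _ hAB)

lemma card_le_degIn {s : Finset (Fin n)} {v : Fin n} (hs : ∀ y ∈ s, y ∈ A ∧ G.Adj v y) :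
    #s ≤ degIn G A v := by
  classical
  rw [← card_filter_adj_eq_degIn]
  exact card_le_card fun y hy => mem_filter.2 (hs y hy)

lemma degIn_le_card_of_forall {s : Finset (Fin n)} {v : Fin n}
    (hs : ∀ y ∈ A, G.Adj v y → y ∈ s) : degIn G A v ≤ #s := by
  classical
  rw [← card_filter_adj_eq_degIn]
  exact card_le_card fun y hy => hs y (mem_filter.1 hy).1 (mem_filter.1 hy).2

lemma degIn_le_degIn {v : Fin n} (h : ∀ y ∈ A, G.Adj v y → H.Adj v y) :
    degIn G A v ≤ degIn H A v := by
  classical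
  rw [← card_filter_adj_eq_degIn]
  exact card_le_degIn fun y hy => ⟨(mem_filter.1 hy).1, h y (mem_filter.1 hy).1 (mem_filter.1 hy).2⟩

lemma degIn_lt_degIn (hGH : G ≤ H) {v q : Fin n} (hq : q ∈ A) (hvq : H.Adj v q)
    (hnvq : ¬ G.Adj v q) : degIn G A v < degIn H A v := by
  classical
  simp only [← card_filter_adj_eq_degIn]
  refine card_lt_card (ssubset_iff_of_subset (monotone_filter_right A fun y _ => @hGH v y) |>.2
    ⟨q, mem_filter.2 ⟨hq, hvq⟩, fun h => hnvq (mem_filter.1 h).2⟩)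

lemma degIn_eq_card {v : Fin n} (h : ∀ a ∈ A, G.Adj v a) : degIn G A v = #A := by
  classical
  rw [← card_filter_adj_eq_degIn, filter_true_of_mem h]

lemma degIn_add_degIn_compl (G : SimpleGraph (Fin n)) (A : Finset (Fin n)) (v : Fin n) :
    degIn G A v + degIn G Aᶜ v = degIn G univ v := by
  classical
  simp only [← card_filter_adj_eq_degIn, card_filter, sum_add_sum_compl]

lemma sum_degIn_univ (G : SimpleGraph (Fin n)) : ∑ v, degIn G univ v = 2 * edgeCount G := by
  classical
  have := G.sum_degrees_eq_twice_card_edges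
  simp only [← SimpleGraph.card_neighborFinset_eq_degree,
    SimpleGraph.neighborFinset_eq_filter, card_filter_adj_eq_degIn] at this
  unfold edgeCount
  convert this

lemma sum_degIn_comm (G : SimpleGraph (Fin n)) (A B : Finset (Fin n)) :
    ∑ b ∈ B, degIn G A b = ∑ a ∈ A, degIn G B a := by
  classical
  have := sum_card_bipartiteAbove_eq_sum_card_bipartiteBelow G.Adj (s := B) (t := A)
  simpa only [bipartiteAbove, bipartiteBelow, ← card_filter_adj_eq_degIn, G.adj_comm] using this

lemma sum_le_card_mul_add_card_filter_mul {ι : Type*} {s : Finset ι} {f : ι → ℝ} {c M : ℝ}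
    (hc : 0 ≤ c) (hM : ∀ i ∈ s, f i ≤ M) : ∑ i ∈ s, f i ≤ #s * c + #{i ∈ s | c ≤ f i} * M := by
  rw [← nsmul_eq_mul, ← sum_const, ← nsmul_eq_mul, ← sum_const, sum_filter, ← sum_add_distrib]
  refine sum_le_sum fun i hi => ?_
  split_ifs with h
  · linarith [hM i hi]
  · linarith

lemma exists_biclique_of_le_degIn {K : ℕ} (hK : 0 < K) (hdeg : ∀ a ∈ A, K ≤ degIn G B a)
    (hcard : 2 ^ #B * K ≤ #A) :
    ∃ S ⊆ A, ∃ T ⊆ B, K ≤ #S ∧ K ≤ #T ∧ ∀ s ∈ S, ∀ t ∈ T, G.Adj s t := by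
  classical
  obtain ⟨T, hT, hfiber⟩ := exists_le_card_fiber_of_mul_le_card_of_maps_to
    (f := fun a => {b ∈ B | G.Adj a b}) (fun a _ => mem_powerset.2 (filter_subset _ B))
    ⟨∅, empty_mem_powerset B⟩ (by rwa [card_powerset])
  obtain ⟨a, ha⟩ := card_pos.1 (hK.trans_le hfiber)
  obtain ⟨haA, rfl⟩ := mem_filter.1 ha
  refine ⟨{a' ∈ A | {b ∈ B | G.Adj a' b} = {b ∈ B | G.Adj a b}}, filter_subset _ A,
    {b ∈ B | G.Adj a b}, filter_subset _ B, hfiber, ?_, fun s hs t ht => ?_⟩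
  · exact (hdeg a haA).trans_eq (card_filter_adj_eq_degIn B a).symm
  · exact (mem_filter.1 ((mem_filter.1 hs).2 ▸ ht : t ∈ {b ∈ B | G.Adj s b})).2

lemma exists_biclique_of_le_sum_degIn {K m : ℕ} {δ : ℝ} (hK : 0 < K) (hn : 0 < n)
    (hmδ : 4 * K < m * δ) (hnδ : 2 * m < n * δ) (hm : m * 2 ^ m ≤ n)
    (hsum : δ * n ^ 2 ≤ ∑ b ∈ B, (degIn G A b : ℝ)) :
    ∃ S ⊆ A, ∃ T ⊆ B, K ≤ #S ∧ K ≤ #T ∧ ∀ s ∈ S, ∀ t ∈ T, G.Adj s t := by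
  have hn0 : (0 : ℝ) < n := Nat.cast_pos.2 hn
  have hδ : 0 < δ := by
    by_contra! h
    nlinarith [(Nat.cast_nonneg m : (0 : ℝ) ≤ m), (Nat.cast_nonneg K : (0 : ℝ) ≤ K)]
  have hle (S : Finset (Fin n)) : (#S : ℝ) ≤ n := Nat.cast_le.2 (card_finset_fin_le S)
  have hrich : m ≤ #{b ∈ B | δ * n / 2 ≤ degIn G A b} := by
    have := sum_le_card_mul_add_card_filter_mul (c := δ * n / 2) (by positivity)
      fun b (_ : b ∈ B) => (Nat.cast_le.2 (degIn_le_card G A b)).trans (hle A)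
    have hB := mul_le_mul_of_nonneg_right (hle B) (by positivity : 0 ≤ δ * n / 2)
    exact Nat.cast_le.1 (le_of_mul_le_mul_right (a := (n : ℝ)) (by nlinarith) hn0)
  obtain ⟨B₀, hB₀, rfl⟩ := exists_subset_card_eq hrich
  have hlow : #B₀ * (δ * n / 2) ≤ ∑ a ∈ A, (degIn G B₀ a : ℝ) := by
    rw [← Nat.cast_sum, ← sum_degIn_comm, Nat.cast_sum, ← nsmul_eq_mul]
    exact card_nsmul_le_sum _ _ _ fun b hb => (mem_filter.1 (hB₀ hb)).2
  have hpopular : K * n ≤ #{a ∈ A | (K : ℝ) ≤ degIn G B₀ a} * #B₀ := by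
    have := sum_le_card_mul_add_card_filter_mul (Nat.cast_nonneg K)
      fun a (_ : a ∈ A) => Nat.cast_le.2 (degIn_le_card G B₀ a)
    have hA := mul_le_mul_of_nonneg_right (hle A) (Nat.cast_nonneg K : (0 : ℝ) ≤ K)
    exact_mod_cast (by nlinarith : (K * n : ℝ) ≤ #{a ∈ A | (K : ℝ) ≤ degIn G B₀ a} * #B₀)
  have hB₀pos : 0 < #B₀ := Nat.pos_of_ne_zero fun h => by
    simp only [h, Nat.cast_zero, zero_mul] at hmδ
    exact (mul_nonneg zero_le_four (Nat.cast_nonneg K)).not_gt hmδ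
  obtain ⟨S, hS, T, hT, h⟩ := exists_biclique_of_le_degIn (A := {a ∈ A | (K : ℝ) ≤ degIn G B₀ a})
    hK (fun a ha => Nat.cast_le.1 (mem_filter.1 ha).2) (Nat.le_of_mul_le_mul_right
      (((by ring : 2 ^ #B₀ * K * #B₀ = K * (#B₀ * 2 ^ #B₀)).trans_le
        (Nat.mul_le_mul_left K hm)).trans hpopular) hB₀pos)
  exact ⟨S, hS.trans (filter_subset _ _), T, hT.trans (hB₀.trans (filter_subset _ _)), h⟩

/-- Every neighbourhood of `G` spans at most `δ n²` edges, stated for the edges between two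
subsets of the neighbourhood of a vertex. -/
def HasSparseNbhds (δ : ℝ) (G : SimpleGraph (Fin n)) : Prop :=
  ∀ (c : Fin n) (A B : Finset (Fin n)), (∀ a ∈ A, G.Adj c a) → (∀ b ∈ B, G.Adj c b) →
    ∑ b ∈ B, (degIn G A b : ℝ) < δ * n ^ 2

theorem WheelFree.exists_forall_hasSparseNbhds (hk : 0 < k) {δ : ℝ} (hδ : 0 < δ) :
    ∃ N, ∀ n ≥ N, ∀ G : SimpleGraph (Fin n), WheelFree (2 * k + 1) G → HasSparseNbhds δ G := by
  obtain ⟨m, hm⟩ := exists_nat_gt (4 * (2 * k : ℕ) / δ)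
  obtain ⟨M, hM⟩ := exists_nat_gt (2 * m / δ)
  rw [div_lt_iff₀ hδ] at hm hM
  refine ⟨max M (m * 2 ^ m + 1), fun n hn G hG c A B hA hB => lt_of_not_ge fun hsum => hG ?_⟩
  have hMn : (M : ℝ) * δ ≤ n * δ :=
    mul_le_mul_of_nonneg_right (Nat.cast_le.2 (le_of_max_le_left hn)) hδ.le
  obtain ⟨S, hS, T, hT, hScard, hTcard, hST⟩ := exists_biclique_of_le_sum_degIn (K := 2 * k)
    (by omega) (Nat.zero_lt_of_lt (le_of_max_le_right hn)) hm (hM.trans_le hMn)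
    (by omega) hsum
  exact containsCopy_wheelGraph_of_biclique hk (by omega) hTcard hST (fun a ha => hA a (hS ha))
    fun b hb => hB b (hT hb)

end DegIn

section LowerBound

/-- The graph obtained from `G` by adding all edges between `L` and its complement. -/
def completeCut {V : Type*} (G : SimpleGraph V) (L : Finset V) : SimpleGraph V :=
  G ⊔ (⊤ : SimpleGraph V).between L Lᶜ

lemma completeCut_adj {V : Type*} {G : SimpleGraph V} {L : Finset V} {x y : V} :
    (completeCut G L).Adj x y ↔ G.Adj x y ∨ x ∈ L ∧ y ∉ L ∨ x ∉ L ∧ y ∈ L := by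
  simp only [completeCut, SimpleGraph.sup_adj, SimpleGraph.between_adj, SimpleGraph.top_adj,
    Set.mem_compl_iff, mem_coe]
  grind

lemma le_completeCut {V : Type*} (G : SimpleGraph V) (L : Finset V) : G ≤ completeCut G L :=
  le_sup_left

lemma completeCut_adj_of_mem {V : Type*} {G : SimpleGraph V} {L : Finset V} {x y : V}
    (hx : x ∈ L) (hy : y ∈ L) : (completeCut G L).Adj x y ↔ G.Adj x y := by
  simp [completeCut_adj, hx, hy]

lemma completeCut_adj_of_notMem {V : Type*} {G : SimpleGraph V} {L : Finset V} {x y : V}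
    (hx : x ∉ L) (hy : y ∉ L) : (completeCut G L).Adj x y ↔ G.Adj x y := by
  simp [completeCut_adj, hx, hy]

variable {n k m : ℕ}

/-- The first `m` vertices are cut into consecutive blocks of length `k`, each of which spans a
clique; all edges between these and the remaining vertices are present. -/
def blockGraph (n k m : ℕ) : SimpleGraph (Fin n) :=
  completeCut (SimpleGraph.fromRel fun i j => i.val < m ∧ j.val < m ∧ i.val / k = j.val / k)
    {i | i.val < m}

lemma blockGraph_adj_of_lt_of_lt {i j : Fin n} (hi : i.val < m) (hj : j.val < m) :
    (blockGraph n k m).Adj i j ↔ i ≠ j ∧ i.val / k = j.val / k := by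
  simp only [blockGraph, completeCut_adj, SimpleGraph.fromRel_adj, mem_filter, mem_univ, true_and,
    hi, hj]
  grind

lemma blockGraph_adj_of_lt_of_le {i j : Fin n} (hi : i.val < m) (hj : m ≤ j.val) :
    (blockGraph n k m).Adj i j :=
  completeCut_adj.2 (.inr (.inl (by simp [hi, hj])))

lemma not_blockGraph_adj_of_le_of_le {i j : Fin n} (hi : m ≤ i.val) (hj : m ≤ j.val) :
    ¬ (blockGraph n k m).Adj i j := by
  simp only [blockGraph, completeCut_adj, SimpleGraph.fromRel_adj, mem_filter, mem_univ, true_and]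
  grind

lemma card_filter_val_mem_Ico {a b : ℕ} (hb : b ≤ n) : #{i : Fin n | i.val ∈ Ico a b} = b - a := by
  rw [card_filter, Fin.sum_univ_eq_sum_range (fun i => if i ∈ Ico a b then 1 else 0) n,
    ← card_filter, filter_mem_eq_inter, inter_eq_right.2, Nat.card_Ico]
  exact fun i hi => mem_range.2 ((mem_Ico.1 hi).2.trans_le hb)

lemma card_filter_val_div_eq (hk : 0 < k) {c : ℕ} (hc : c < n / k) :
    #{i : Fin n | i.val / k = c} = k := by
  have hIco (a : ℕ) : a / k = c ↔ a ∈ Ico (c * k) (c * k + k) := by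
    rw [Nat.div_eq_iff hk, mem_Ico]
    omega
  simp only [hIco]
  rw [card_filter_val_mem_Ico, Nat.add_sub_cancel_left]
  rw [← Nat.succ_mul]
  exact (Nat.le_div_iff_mul_le hk).1 hc

variable {q : ℕ}

lemma div_lt_div_of_lt_mul (hk : 0 < k) (hq : k * q ≤ n) {i : ℕ} (hi : i < k * q) :
    i / k < n / k :=
  (Nat.div_lt_of_lt_mul hi).trans_le ((Nat.le_div_iff_mul_le hk).2 ((mul_comm q k).trans_le hq))

lemma degIn_blockGraph (hk : 0 < k) (hq : k * q ≤ n) {u : Fin n} (hu : u.val < k * q) :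
    degIn (blockGraph n k (k * q)) {i | i.val < k * q} u = k - 1 := by
  classical
  have hblock : #(({i : Fin n | i.val / k = u.val / k} : Finset (Fin n)).erase u) = k - 1 := by
    rw [card_erase_of_mem (by simp), card_filter_val_div_eq hk (div_lt_div_of_lt_mul hk hq hu)]
  rw [← hblock, ← card_filter_adj_eq_degIn]
  congr 1
  ext v
  have hv : v.val / k = u.val / k → v.val < k * q := fun h =>
    (Nat.div_lt_iff_lt_mul hk).1 (h ▸ Nat.div_lt_of_lt_mul hu) |>.trans_eq (mul_comm q k)
  simp only [mem_filter, mem_univ, true_and, mem_erase]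
  constructor
  · rintro ⟨hvq, hadj⟩
    exact ((blockGraph_adj_of_lt_of_lt hu hvq).1 hadj).imp Ne.symm Eq.symm
  · rintro ⟨hne, hdiv⟩
    exact ⟨hv hdiv, (blockGraph_adj_of_lt_of_lt hu (hv hdiv)).2 ⟨hne.symm, hdiv.symm⟩⟩

lemma not_isCycleIn_blockGraph (hk : 0 < k) (hq : k * q ≤ n) (f : ZMod (2 * k) → Fin n) :
    ¬ IsCycleIn (blockGraph n k (k * q)) {i | i.val < k * q} f := by
  intro hf
  have : NeZero (2 * k) := ⟨by omega⟩
  have hlt (i : ZMod (2 * k)) : (f i).val < k * q := hf.mem i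
  have hblock (j : ℕ) : (f j).val / k = (f 0).val / k := by
    induction j with
    | zero => simp
    | succ j ih =>
      rw [Nat.cast_succ, ← ((blockGraph_adj_of_lt_of_lt (hlt _) (hlt _)).1 (hf.adj j)).2, ih]
  have hcard : #(univ : Finset (ZMod (2 * k))) ≤ #{i : Fin n | i.val / k = (f 0).val / k} :=
    card_le_card_of_injOn f
      (fun i _ => by simpa using ZMod.natCast_zmod_val i ▸ hblock i.val) hf.injective.injOn
  rw [card_filter_val_div_eq hk (div_lt_div_of_lt_mul hk hq (hlt 0)), card_univ, ZMod.card] at hcard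
  omega

theorem wheelFree_blockGraph (hk : 2 ≤ k) (hq : k * q ≤ n) :
    WheelFree (2 * k + 1) (blockGraph n k (k * q)) := by
  refine wheelFree_of_forall_not_isCycleIn (L := {i | i.val < k * q}) hk (fun u hu => ?_)
    (fun x hx y hy => not_blockGraph_adj_of_le_of_le (by simpa using hx) (by simpa using hy))
    fun f hf => not_isCycleIn_blockGraph (by omega) hq f (by simpa using hf)
  rw [degIn_blockGraph (by omega) hq (by simpa using hu)]
  omega

lemma le_two_mul_edgeCount_blockGraph (hk : 0 < k) (hq : k * q ≤ n) :
    k * q * (k - 1) + 2 * (k * q * (n - k * q)) ≤ 2 * edgeCount (blockGraph n k (k * q)) := by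
  set B := blockGraph n k (k * q)
  set L : Finset (Fin n) := {i | i.val < k * q} with hLdef
  have hL : #L = k * q := by simpa [hLdef] using card_filter_val_mem_Ico (a := 0) hq
  have hLc : #Lᶜ = n - k * q := by rw [card_compl, hL, Fintype.card_fin]
  have hin : ∀ u ∈ L, degIn B L u = k - 1 := fun u hu =>
    degIn_blockGraph hk hq (by simpa [hLdef] using hu)
  have hout : ∀ u ∈ L, degIn B Lᶜ u = #Lᶜ := fun u hu => degIn_eq_card fun v hv =>
    blockGraph_adj_of_lt_of_le (by simpa [hLdef] using hu) (by simpa [hLdef] using hv)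
  have hsum : ∑ u ∈ L, degIn B L u + 2 * ∑ u ∈ L, degIn B Lᶜ u ≤ 2 * edgeCount B := by
    have hle : ∑ u ∈ L, degIn B Lᶜ u ≤ ∑ u, degIn B Lᶜ u := sum_le_sum_of_subset (subset_univ L)
    rw [← sum_degIn_univ]
    simp only [← degIn_add_degIn_compl B L, sum_add_distrib]
    rw [sum_degIn_comm B L univ]
    simp only [← degIn_add_degIn_compl B L, sum_add_distrib]
    omega
  rwa [sum_congr rfl hin, sum_congr rfl hout, sum_const, sum_const, smul_eq_mul, smul_eq_mul, hL,
    hLc] at hsum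

theorem IsSpexWheel.le_lam1_mul (hk : 2 ≤ k) (hn : 0 < n) {G : SimpleGraph (Fin n)}
    (hG : IsSpexWheel (2 * k + 1) G) :
    (n ^ 2 / 2 + (k - 1) * n / 2 - 3 * k ^ 2 : ℝ) ≤ lam1 G * n := by
  have : NeZero n := ⟨hn.ne'⟩
  obtain ⟨q, hq⟩ : ∃ q, q = n / (2 * k) := ⟨_, rfl⟩
  have hdiv := Nat.div_add_mod n (2 * k)
  have hmod := Nat.mod_lt n (show 0 < 2 * k by omega)
  rw [← hq, mul_assoc] at hdiv
  have hqn : k * q ≤ n := by omega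
  have hedge := le_two_mul_edgeCount_blockGraph (by omega) hqn
  have hlam : (2 * edgeCount (blockGraph n k (k * q)) : ℝ) ≤ lam1 G * n :=
    (two_mul_edgeCount_le_lam1_mul _).trans
      (mul_le_mul_of_nonneg_right (hG.2 _ (wheelFree_blockGraph hk hqn)) (Nat.cast_nonneg n))
  refine le_trans ?_ ((Nat.cast_le.2 hedge).trans (by exact_mod_cast hlam))
  have h2m : (2 * (k * q) : ℝ) ≤ n := by exact_mod_cast (by omega : 2 * (k * q) ≤ n)
  have hn2m : (n : ℝ) ≤ 2 * (k * q) + 2 * k := by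
    exact_mod_cast (by omega : n ≤ 2 * (k * q) + 2 * k)
  have : (2 : ℝ) ≤ k := by exact_mod_cast hk
  push_cast [Nat.cast_sub hqn, Nat.cast_sub (by omega : 1 ≤ k)]
  generalize (k * q : ℝ) = m at *
  nlinarith [mul_nonneg (sub_nonneg.2 h2m) (sub_nonneg.2 hn2m)]

end LowerBound

section MaxCut

variable {n : ℕ} {G : SimpleGraph (Fin n)} {A B L R : Finset (Fin n)} {x : Fin n → ℝ} {θ : ℝ}

lemma degIn_union (G : SimpleGraph (Fin n)) (hAB : Disjoint A B) (v : Fin n) :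
    degIn G (A ∪ B) v = degIn G A v + degIn G B v := by
  classical
  simp only [← card_filter_adj_eq_degIn, card_filter, sum_union hAB]

lemma degIn_insert {w : Fin n} (hw : w ∉ A) (v : Fin n) :
    degIn G (insert w A) v = degIn G {w} v + degIn G A v := by
  rw [insert_eq, degIn_union G (disjoint_singleton_left.2 hw)]

lemma degIn_singleton_self (G : SimpleGraph (Fin n)) (v : Fin n) : degIn G {v} v = 0 := by
  classical
  rw [← card_filter_adj_eq_degIn, card_eq_zero, filter_eq_empty_iff]
  simp

lemma degIn_add_degIn_graph_compl {v : Fin n} (hv : v ∉ A) :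
    degIn G A v + degIn Gᶜ A v = #A := by
  classical
  rw [← card_filter_adj_eq_degIn, ← card_filter_adj_eq_degIn,
    ← card_filter_add_card_filter_not (s := A) (G.Adj v ·)]
  congr 2
  refine filter_congr fun a ha => ?_
  rw [SimpleGraph.compl_adj, and_iff_right (ne_of_mem_of_not_mem ha hv).symm]

lemma adj_of_degIn_graph_compl_eq_zero {v a : Fin n} (hv : v ∉ A) (h : degIn Gᶜ A v = 0)
    (ha : a ∈ A) : G.Adj v a := by
  classical
  rw [← card_filter_adj_eq_degIn, card_eq_zero, filter_eq_empty_iff] at h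
  by_contra hadj
  exact h ha ⟨(ne_of_mem_of_not_mem ha hv).symm, hadj⟩

lemma sum_degIn_add_sum_degIn_graph_compl (G : SimpleGraph (Fin n)) (hAB : Disjoint A B) :
    (∑ a ∈ A, degIn G B a : ℝ) + ∑ a ∈ A, (degIn Gᶜ B a : ℝ) = #A * #B := by
  rw [← sum_add_distrib, ← nsmul_eq_mul, ← sum_const]
  exact sum_congr rfl fun a ha => mod_cast
    degIn_add_degIn_graph_compl (G := G) (disjoint_left.1 hAB ha)

lemma exists_common_nbrs {U : Finset (Fin n)} {b : ℝ} (hUA : Disjoint U A)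
    (hb : ∀ u ∈ U, (degIn Gᶜ A u : ℝ) ≤ b) :
    ∃ C ⊆ A, (∀ u ∈ U, ∀ c ∈ C, G.Adj u c) ∧ #A - #U * b ≤ #C := by
  classical
  refine ⟨{a ∈ A | ∀ u ∈ U, G.Adj u a}, filter_subset _ _,
    fun u hu c hc => (mem_filter.1 hc).2 u hu, ?_⟩
  have hbad : {a ∈ A | ¬ ∀ u ∈ U, G.Adj u a} ⊆ U.biUnion fun u => {a ∈ A | Gᶜ.Adj u a} := by
    intro a ha
    obtain ⟨haA, hau⟩ := mem_filter.1 ha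
    push Not at hau
    obtain ⟨u, hu, hadj⟩ := hau
    exact mem_biUnion.2 ⟨u, hu, mem_filter.2 ⟨haA,
      fun h => disjoint_left.1 hUA hu (h ▸ haA), hadj⟩⟩
  have hcard := (card_le_card hbad).trans card_biUnion_le
  simp only [card_filter_adj_eq_degIn] at hcard
  have hsum : (∑ u ∈ U, degIn Gᶜ A u : ℝ) ≤ #U * b := by
    rw [← nsmul_eq_mul]
    exact sum_le_card_nsmul _ _ _ hb
  have hsplit : #{a ∈ A | ∀ u ∈ U, G.Adj u a} + #{a ∈ A | ¬ ∀ u ∈ U, G.Adj u a} = #A :=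
    card_filter_add_card_filter_not _
  rw [sub_le_iff_le_add, ← hsplit, Nat.cast_add]
  exact add_le_add_right ((Nat.cast_le.2 hcard).trans (mod_cast hsum)) _

lemma cutCount_eq_sum_degIn (G : SimpleGraph (Fin n)) (S : Finset (Fin n)) :
    cutCount G S = ∑ v ∈ S, degIn G Sᶜ v := by
  classical
  simp only [← card_filter_adj_eq_degIn, card_filter]
  rw [← sum_product', ← card_filter]
  unfold cutCount
  congr 1
  ext p
  simp only [mem_filter, mem_univ, mem_product, mem_compl, true_and]
  tauto

lemma IsMaxCut.symm (h : IsMaxCut G L R) : IsMaxCut G R L := by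
  obtain ⟨rfl, hmax⟩ := h
  refine ⟨(compl_compl L).symm, fun S => (hmax S).trans_eq ?_⟩
  rw [cutCount_eq_sum_degIn, cutCount_eq_sum_degIn, compl_compl, sum_degIn_comm]

lemma IsMaxCut.degIn_le (h : IsMaxCut G L R) {v : Fin n} (hv : v ∈ L) :
    degIn G L v ≤ degIn G R v := by
  obtain ⟨rfl, hmax⟩ := h
  have hle := hmax (L.erase v)
  have hL := degIn_insert (G := G) (notMem_erase v L) v
  rw [insert_erase hv, degIn_singleton_self, zero_add] at hL
  simp only [cutCount_eq_sum_degIn, compl_erase, degIn_insert (notMem_compl.2 hv),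
    sum_add_distrib, ← add_sum_erase L _ hv] at hle
  rw [sum_degIn_comm, sum_singleton, ← hL] at hle
  exact Nat.le_of_add_le_add_right hle

lemma nbrSum_le_degIn (hx : ∀ v, x v ≤ 1) (A : Finset (Fin n)) (v : Fin n) :
    nbrSum G x A v ≤ degIn G A v := by
  classical
  rw [← card_filter_adj_eq_degIn, ← nsmul_one]
  exact (sum_le_card_nsmul _ _ _ fun w _ => hx w).trans_eq (by congr)

/-- A maximum cut whose number of crossing edges is within `θ² n²` of the trivial upper
bound `n² / 4`. -/
structure IsDenseMaxCut (θ : ℝ) (G : SimpleGraph (Fin n)) (L R : Finset (Fin n)) : Prop where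
  isMaxCut : IsMaxCut G L R
  le_sum_degIn : (n ^ 2 / 4 - θ ^ 2 * n ^ 2 : ℝ) ≤ ∑ v ∈ L, (degIn G R v : ℝ)

/-- The neighbourhood of a vertex of maximal Perron weight is one side of a dense cut: the
eigenvalue equation at its neighbours counts `lam1 G ^ 2` walks, few of them inside. -/
theorem IsMaxCut.isDenseMaxCut (h : IsMaxCut G L R) (hx : IsPerronVector G x)
    (hG : HasSparseNbhds (θ ^ 2) G) (hlam : (n / 2 : ℝ) ≤ lam1 G) : IsDenseMaxCut θ G L R := by
  classical
  refine ⟨h, ?_⟩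
  obtain ⟨z, hz⟩ := hx.exists_eq_one
  have hNz := hx.nbrSum_univ z
  rw [hz, mul_one, nbrSum] at hNz
  set N : Finset (Fin n) := {w | G.Adj z w}
  have hN : ∀ w ∈ N, G.Adj z w := fun w hw => (mem_filter.1 hw).2
  have hwalks : lam1 G * lam1 G ≤
      ∑ v ∈ N, (degIn G N v : ℝ) + ∑ v ∈ N, (degIn G Nᶜ v : ℝ) := by
    calc lam1 G * lam1 G = lam1 G * ∑ v ∈ N, x v := by rw [← hNz]
      _ = ∑ v ∈ N, (nbrSum G x N v + nbrSum G x Nᶜ v) := by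
        simp only [nbrSum_add_nbrSum_compl, hx.nbrSum_univ, mul_sum]
      _ ≤ _ := by
        rw [← sum_add_distrib]
        exact sum_le_sum fun v _ =>
          add_le_add (nbrSum_le_degIn hx.le_one _ _) (nbrSum_le_degIn hx.le_one _ _)
  have hcut := h.2 N
  rw [cutCount_eq_sum_degIn, cutCount_eq_sum_degIn, ← h.1] at hcut
  have hcut' : (∑ v ∈ N, degIn G Nᶜ v : ℝ) ≤ ∑ v ∈ L, (degIn G R v : ℝ) := mod_cast hcut
  have hsq := mul_self_le_mul_self (by positivity) hlam
  linarith [hG z N N hN hN]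

namespace IsDenseMaxCut

lemma symm (h : IsDenseMaxCut θ G L R) : IsDenseMaxCut θ G R L := by
  refine ⟨h.isMaxCut.symm, h.le_sum_degIn.trans_eq ?_⟩
  exact_mod_cast sum_degIn_comm G R L

lemma disjoint (h : IsDenseMaxCut θ G L R) : Disjoint L R :=
  h.isMaxCut.1 ▸ disjoint_compl_right

lemma card_add_card (h : IsDenseMaxCut θ G L R) : (#L + #R : ℝ) = n := by
  rw [h.isMaxCut.1]
  exact_mod_cast (card_add_card_compl L).trans (Fintype.card_fin n)

lemma sum_degIn_graph_compl_add_sq (h : IsDenseMaxCut θ G L R) :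
    (∑ v ∈ L, degIn Gᶜ R v : ℝ) + (#L - n / 2) ^ 2 ≤ (θ * n) ^ 2 := by
  have hmul := sum_degIn_add_sum_degIn_graph_compl G h.disjoint
  rw [eq_sub_of_add_eq' h.card_add_card] at hmul
  linarith [h.le_sum_degIn]

lemma sum_degIn_graph_compl_le (h : IsDenseMaxCut θ G L R) :
    (∑ v ∈ L, degIn Gᶜ R v : ℝ) ≤ (θ * n) ^ 2 :=
  (le_add_of_nonneg_right (sq_nonneg _)).trans h.sum_degIn_graph_compl_add_sq

lemma abs_card_sub_le (h : IsDenseMaxCut θ G L R) (hθ : 0 ≤ θ) : |(#L - n / 2 : ℝ)| ≤ θ * n :=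
  abs_le_of_sq_le_sq ((le_add_of_nonneg_left (sum_nonneg fun _ _ => Nat.cast_nonneg _)).trans
    h.sum_degIn_graph_compl_add_sq) (by positivity)

/-- A vertex with many neighbours on its own side has as many on the other side, and the two
neighbourhoods are almost completely joined, against sparsity. -/
theorem degIn_lt (h : IsDenseMaxCut θ G L R) (hG : HasSparseNbhds (θ ^ 2) G) (hθ : 0 < θ)
    (hn : 0 < n) {v : Fin n} (hv : v ∈ L) : (degIn G L v : ℝ) < 2 * θ * n := by
  classical
  by_contra! hlarge
  have hle : (degIn G L v : ℝ) ≤ degIn G R v := Nat.cast_le.2 (h.isMaxCut.degIn_le hv)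
  rw [← card_filter_adj_eq_degIn] at hlarge hle
  rw [← card_filter_adj_eq_degIn] at hle
  have hsub (A : Finset (Fin n)) : {u ∈ A | G.Adj v u} ⊆ A := filter_subset _ _
  have hsparse := hG v {u ∈ R | G.Adj v u} {u ∈ L | G.Adj v u}
    (fun a ha => (mem_filter.1 ha).2) fun a ha => (mem_filter.1 ha).2
  have hmul := sum_degIn_add_sum_degIn_graph_compl G (h.disjoint.mono (hsub L) (hsub R))
  have hmiss : (∑ u ∈ L with G.Adj v u, degIn Gᶜ {u ∈ R | G.Adj v u} u : ℝ) ≤ (θ * n) ^ 2 :=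
    ((sum_le_sum fun u _ => Nat.cast_le.2 (degIn_mono _ (hsub R) u)).trans
      (sum_le_sum_of_subset_of_nonneg (hsub L) fun _ _ _ => Nat.cast_nonneg _)).trans
      h.sum_degIn_graph_compl_le
  have hpos : (0 : ℝ) < 2 * θ * n := by positivity
  nlinarith [mul_le_mul hlarge (hlarge.trans hle) hpos.le (by positivity)]

end IsDenseMaxCut

end MaxCut

section Stability

variable {n k : ℕ} {G : SimpleGraph (Fin n)} {A L R : Finset (Fin n)} {x : Fin n → ℝ} {θ : ℝ}
  {v w z : Fin n}

lemma nbrSum_le_sum (hx : ∀ v, 0 ≤ x v) (A : Finset (Fin n)) (v : Fin n) :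
    nbrSum G x A v ≤ ∑ w ∈ A, x w := by
  classical
  exact sum_le_sum_of_subset_of_nonneg (filter_subset _ _) fun w _ _ => hx w

lemma nbrSum_add_nbrSum_graph_compl (x : Fin n → ℝ) (hv : v ∉ A) :
    nbrSum G x A v + nbrSum Gᶜ x A v = ∑ w ∈ A, x w := by
  classical
  rw [nbrSum_eq_sum_ite, nbrSum_eq_sum_ite, ← sum_add_distrib]
  refine sum_congr rfl fun w hw => ?_
  have hne := (ne_of_mem_of_not_mem hw hv).symm
  by_cases hadj : G.Adj v w <;> simp [hadj, hne]

namespace IsPerronVector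

lemma nbrSum_add_nbrSum (hx : IsPerronVector G x) (hLR : R = Lᶜ) (v : Fin n) :
    nbrSum G x L v + nbrSum G x R v = lam1 G * x v := by
  rw [hLR, nbrSum_add_nbrSum_compl, hx.nbrSum_univ]

lemma sum_sub_degIn_graph_compl_le (hx : IsPerronVector G x) (hv : v ∉ A) :
    ∑ w ∈ A, x w - degIn Gᶜ A v ≤ lam1 G * x v := by
  have hcompl : 0 ≤ nbrSum G x Aᶜ v := sum_nonneg fun w _ => hx.nonneg w
  linarith [nbrSum_add_nbrSum_graph_compl (G := G) x hv, hx.nbrSum_add_nbrSum rfl v (L := A),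
    nbrSum_le_degIn (G := Gᶜ) hx.le_one A v]

lemma lam1_mul_le_degIn_add_degIn (hx : IsPerronVector G x) (hLR : R = Lᶜ) (v : Fin n) :
    lam1 G * x v ≤ degIn G L v + degIn G R v :=
  (hx.nbrSum_add_nbrSum hLR v).symm.trans_le
    (add_le_add (nbrSum_le_degIn hx.le_one L v) (nbrSum_le_degIn hx.le_one R v))

lemma lam1_mul_le_degIn_add_sum (hx : IsPerronVector G x) (hLR : R = Lᶜ) (v : Fin n) :
    lam1 G * x v ≤ degIn G L v + ∑ w ∈ R, x w :=
  (hx.nbrSum_add_nbrSum hLR v).symm.trans_le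
    (add_le_add (nbrSum_le_degIn hx.le_one L v) (nbrSum_le_sum hx.nonneg R v))

lemma sum_le_card (hx : IsPerronVector G x) (A : Finset (Fin n)) : ∑ v ∈ A, x v ≤ #A := by
  simpa using sum_le_card_nsmul A x 1 fun v _ => hx.le_one v

end IsPerronVector

/-- The setting of the stability argument: a maximum cut of a spectral extremal graph with its
Perron vector, on so many vertices that the errors of order `θ n` are controlled by powers
of `k`. -/
structure IsExtremalCut (k : ℕ) (θ : ℝ) (G : SimpleGraph (Fin n)) (x : Fin n → ℝ)
    (L R : Finset (Fin n)) : Prop where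
  three_le : 3 ≤ k
  mul_eq_one : 1000 * k ^ 3 * θ = 1
  le_mul : 5 * k ^ 2 ≤ θ * n
  isSpexWheel : IsSpexWheel (2 * k + 1) G
  isPerronVector : IsPerronVector G x
  hasSparseNbhds : HasSparseNbhds (θ ^ 2) G
  isMaxCut : IsMaxCut G L R

namespace IsExtremalCut

lemma symm (h : IsExtremalCut k θ G x L R) : IsExtremalCut k θ G x R L :=
  { h with isMaxCut := h.isMaxCut.symm }

lemma disjoint (h : IsExtremalCut k θ G x L R) : Disjoint L R :=
  h.isMaxCut.1 ▸ disjoint_compl_right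

lemma mem_or_mem (h : IsExtremalCut k θ G x L R) (v : Fin n) : v ∈ L ∨ v ∈ R := by
  rw [h.isMaxCut.1, mem_compl]
  exact em _

lemma three_le_cast (h : IsExtremalCut k θ G x L R) : (3 : ℝ) ≤ k := mod_cast h.three_le

lemma theta_pos (h : IsExtremalCut k θ G x L R) : 0 < θ :=
  pos_of_mul_pos_right (h.mul_eq_one ▸ one_pos) (by positivity)

lemma sq_mul_theta_le (h : IsExtremalCut k θ G x L R) : k ^ 2 * θ ≤ 1 / 3000 := by
  have := mul_le_mul_of_nonneg_right h.three_le_cast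
    (mul_nonneg (sq_nonneg (k : ℝ)) h.theta_pos.le)
  linarith [h.mul_eq_one]

lemma mul_theta_le (h : IsExtremalCut k θ G x L R) : k * θ ≤ 1 / 9000 := by
  have := mul_le_mul_of_nonneg_right h.three_le_cast
    (mul_nonneg (Nat.cast_nonneg (α := ℝ) k) h.theta_pos.le)
  linarith [h.sq_mul_theta_le]

lemma theta_le (h : IsExtremalCut k θ G x L R) : θ ≤ 1 / 27000 := by
  have := mul_le_mul_of_nonneg_right h.three_le_cast h.theta_pos.le
  linarith [h.mul_theta_le]

lemma pos (h : IsExtremalCut k θ G x L R) : 0 < n := by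
  have := h.isPerronVector.neZero
  exact Nat.pos_of_neZero n

lemma theta_mul_pos (h : IsExtremalCut k θ G x L R) : 0 < θ * n :=
  mul_pos h.theta_pos (Nat.cast_pos.2 h.pos)

lemma three_mul_le_theta_mul (h : IsExtremalCut k θ G x L R) : 3 * k ≤ θ * n := by
  nlinarith [h.le_mul, h.three_le_cast]

lemma half_le_lam1 (h : IsExtremalCut k θ G x L R) : (n / 2 : ℝ) ≤ lam1 G := by
  have hn : (0 : ℝ) < n := Nat.cast_pos.2 h.pos
  have hlam := h.isSpexWheel.le_lam1_mul (by linarith [h.three_le]) h.pos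
  have hθn := mul_le_mul_of_nonneg_right h.theta_le hn.le
  have hkn := mul_le_mul_of_nonneg_right h.three_le_cast hn.le
  exact le_of_mul_le_mul_right (a := (n : ℝ)) (by linarith [h.le_mul]) hn

lemma isDenseMaxCut (h : IsExtremalCut k θ G x L R) : IsDenseMaxCut θ G L R :=
  h.isMaxCut.isDenseMaxCut h.isPerronVector h.hasSparseNbhds h.half_le_lam1

lemma le_card (h : IsExtremalCut k θ G x L R) : n / 2 - θ * n ≤ #L := by
  linarith [(abs_le.1 (h.isDenseMaxCut.abs_card_sub_le h.theta_pos.le)).1]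

lemma card_le (h : IsExtremalCut k θ G x L R) : #L ≤ n / 2 + θ * n := by
  linarith [(abs_le.1 (h.isDenseMaxCut.abs_card_sub_le h.theta_pos.le)).2]

lemma mul_add_lt_card (h : IsExtremalCut k θ G x L R) :
    (2 * k + 1) * (6 * θ * n) + (2 * k + 1) < #L := by
  have hn : (0 : ℝ) < n := Nat.cast_pos.2 h.pos
  nlinarith [h.le_card, mul_le_mul_of_nonneg_right h.mul_theta_le hn.le,
    mul_le_mul_of_nonneg_right h.theta_le hn.le, h.three_mul_le_theta_mul, h.three_le_cast]

/-- Otherwise rewiring `w` to `T` would increase the spectral radius; no wheel appears, because a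
vertex of `L` can replace `w`. -/
theorem sum_le_lam1_mul (h : IsExtremalCut k θ G x L R) {T : Finset (Fin n)} (hTR : T ⊆ R)
    (hT : ∀ y ∈ T, (degIn Gᶜ L y : ℝ) ≤ 6 * θ * n) (hw : w ∉ T) :
    ∑ v ∈ T, x v ≤ lam1 G * x w := by
  by_contra! hlt
  refine (h.isPerronVector.lam1_lt_lam1_rewire hw hlt).not_ge (h.isSpexWheel.2 _ fun hF => ?_)
  refine h.isSpexWheel.1 (hF.of_rewire fun U hU => ?_)
  rw [Fintype.card_fin] at hU
  obtain ⟨C, -, hadj, hC⟩ := exists_common_nbrs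
    (h.disjoint.symm.mono_left (inter_subset_right.trans hTR)) fun u hu =>
      hT u (mem_of_mem_inter_right hu : u ∈ T)
  have hU' : (#U : ℝ) ≤ 2 * k + 1 := mod_cast hU
  have hUT : (#(U ∩ T) : ℝ) * (6 * θ * n) ≤ (2 * k + 1) * (6 * θ * n) :=
    mul_le_mul_of_nonneg_right ((Nat.cast_le.2 (card_le_card inter_subset_left)).trans hU')
      (by linarith [h.theta_mul_pos])
  obtain ⟨w', hw'C, hw'U⟩ := exists_mem_notMem_of_card_lt_card
    (Nat.cast_lt.1 (by linarith [h.mul_add_lt_card] : (#U : ℝ) < #C))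
  exact ⟨w', hw'U, fun y hyU hyT => (hadj y (mem_inter.2 ⟨hyU, hyT⟩) w' hw'C).symm⟩

lemma card_filter_lt_degIn_graph_compl_le (h : IsExtremalCut k θ G x L R) :
    (#{r ∈ R | 6 * θ * n < degIn Gᶜ L r} : ℝ) ≤ θ * n / 6 := by
  have hmarkov : #{r ∈ R | 6 * θ * n < degIn Gᶜ L r} * (6 * θ * n) ≤ (θ * n) ^ 2 := by
    rw [← nsmul_eq_mul]
    refine (card_nsmul_le_sum _ _ _ fun r hr => (mem_filter.1 hr).2.le).trans ?_
    exact (sum_le_sum_of_subset_of_nonneg (filter_subset _ _) fun _ _ _ =>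
      Nat.cast_nonneg _).trans h.isDenseMaxCut.symm.sum_degIn_graph_compl_le
  nlinarith [h.theta_mul_pos]

lemma le_degIn_add_degIn (h : IsExtremalCut k θ G x L R) (hzL : z ∈ L) (hz : x z = 1)
    (hw : w ∈ R → 6 * θ * n < degIn Gᶜ L w) :
    n / 2 - 13 / 6 * (θ * n) ≤ degIn G L w + degIn G R w := by
  have hx := h.isPerronVector
  have hsplit := sum_filter_add_sum_filter_not R (fun r => 6 * θ * n < degIn Gᶜ L r) x
  have hT := h.sum_le_lam1_mul (w := w) (filter_subset (fun r => ¬ 6 * θ * n < degIn Gᶜ L r) R)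
    (fun r hr => not_lt.1 (mem_filter.1 hr).2)
    fun hwT => (mem_filter.1 hwT).2 (hw (mem_filter.1 hwT).1)
  have hz' := hx.lam1_mul_le_degIn_add_sum h.isMaxCut.1 z
  rw [hz, mul_one] at hz'
  linarith [hx.sum_le_card {r ∈ R | 6 * θ * n < degIn Gᶜ L r}, h.half_le_lam1,
    h.card_filter_lt_degIn_graph_compl_le, hx.lam1_mul_le_degIn_add_degIn h.isMaxCut.1 w,
    h.isDenseMaxCut.degIn_lt h.hasSparseNbhds h.theta_pos h.pos hzL]

lemma degIn_graph_compl_le_of_le (h : IsExtremalCut k θ G x L R) (hw : w ∈ L)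
    (hdeg : n / 2 - 13 / 6 * (θ * n) ≤ degIn G L w + degIn G R w) :
    degIn Gᶜ R w ≤ 6 * θ * n := by
  have hR : (degIn G R w + degIn Gᶜ R w : ℝ) = #R :=
    mod_cast degIn_add_degIn_graph_compl (disjoint_left.1 h.disjoint hw)
  linarith [h.isDenseMaxCut.degIn_lt h.hasSparseNbhds h.theta_pos h.pos hw, h.symm.card_le,
    h.theta_mul_pos]

theorem degIn_graph_compl_le (h : IsExtremalCut k θ G x L R) (hw : w ∈ L) :
    degIn Gᶜ R w ≤ 6 * θ * n := by
  obtain ⟨z, hz⟩ := h.isPerronVector.exists_eq_one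
  refine (h.mem_or_mem z).elim (fun hzL => h.degIn_graph_compl_le_of_le hw ?_) fun hzR => ?_
  · exact h.le_degIn_add_degIn hzL hz fun hwR => (disjoint_left.1 h.disjoint hw hwR).elim
  · by_contra! hlt
    refine hlt.not_ge (h.degIn_graph_compl_le_of_le hw ?_)
    rw [add_comm]
    exact h.symm.le_degIn_add_degIn hzR hz fun _ => hlt

lemma exists_card_eq_common_nbrs (h : IsExtremalCut k θ G x L R) {U : Finset (Fin n)}
    (hU : U ⊆ L) (hcard : #U ≤ 2 * k + 1) :
    ∃ C ⊆ R, 2 * k + 1 ≤ #C ∧ ∀ u ∈ U, ∀ c ∈ C, G.Adj u c := by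
  obtain ⟨C, hCR, hadj, hC⟩ := exists_common_nbrs (h.disjoint.mono_left hU) fun u hu =>
    h.degIn_graph_compl_le (hU hu)
  have hmul : (#U : ℝ) * (6 * θ * n) ≤ (2 * k + 1) * (6 * θ * n) :=
    mul_le_mul_of_nonneg_right (mod_cast hcard) (by linarith [h.theta_mul_pos])
  exact ⟨C, hCR, by exact_mod_cast (by linarith [h.symm.mul_add_lt_card] : (2 * k + 1 : ℝ) ≤ #C),
    hadj⟩

/-- A vertex with `k` neighbours on its own side is the hub of a wheel, whose rim alternates
between these neighbours and vertices of the other side. -/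
theorem degIn_lt (h : IsExtremalCut k θ G x L R) (hv : v ∈ L) : degIn G L v < k := by
  classical
  by_contra! hk
  rw [← card_filter_adj_eq_degIn] at hk
  obtain ⟨A, hA, hAk⟩ := exists_subset_card_eq hk
  have hAL : ∀ a ∈ A, a ∈ L ∧ G.Adj v a := fun a ha => mem_filter.1 (hA ha)
  obtain ⟨C, -, hC, hadj⟩ := h.exists_card_eq_common_nbrs (U := insert v A)
    (insert_subset hv fun a ha => (hAL a ha).1)
    ((card_insert_le v A).trans (by omega))
  exact h.isSpexWheel.1 (containsCopy_wheelGraph_of_biclique (by linarith [h.three_le]) hAk.ge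
    (by omega) (fun a ha => hadj a (mem_insert_of_mem ha)) (fun a ha => (hAL a ha).2)
    (hadj v (mem_insert_self v A)))

lemma lam1_le_mul_add_sum (h : IsExtremalCut k θ G x L R) (hzL : z ∈ L) (hz : x z = 1) :
    lam1 G ≤ θ * n + ∑ v ∈ R, x v := by
  have hle := h.isPerronVector.lam1_mul_le_degIn_add_sum h.isMaxCut.1 z
  have hdeg : (degIn G L z : ℝ) ≤ k := Nat.cast_le.2 (h.degIn_lt hzL).le
  rw [hz, mul_one] at hle
  linarith [h.three_mul_le_theta_mul, (Nat.cast_nonneg k : (0 : ℝ) ≤ k)]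

lemma le_of_mem_side_of_eq_one (h : IsExtremalCut k θ G x L R) (hzL : z ∈ L) (hz : x z = 1)
    (hv : v ∈ L) : 1 - 14 * θ ≤ x v := by
  have hlam : 0 < lam1 G := (half_pos (Nat.cast_pos.2 h.pos)).trans_le h.half_le_lam1
  have hsum := h.isPerronVector.sum_sub_degIn_graph_compl_le (disjoint_left.1 h.disjoint hv)
  have hmul := mul_le_mul_of_nonneg_right h.half_le_lam1 h.theta_pos.le
  refine le_of_mul_le_mul_left (a := lam1 G) ?_ hlam
  linarith [h.lam1_le_mul_add_sum hzL hz, h.degIn_graph_compl_le hv]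

lemma le_of_mem_other_side (h : IsExtremalCut k θ G x L R) (hzL : z ∈ L) (hz : x z = 1)
    (hv : v ∈ R) : 1 - 34 * θ ≤ x v := by
  have hn : (0 : ℝ) < n := Nat.cast_pos.2 h.pos
  have hθ := h.theta_pos
  have hlam : lam1 G ≤ n / 2 + 2 * θ * n := by
    linarith [h.lam1_le_mul_add_sum hzL hz, h.isPerronVector.sum_le_card R, h.symm.card_le]
  have hsum := h.isPerronVector.sum_sub_degIn_graph_compl_le (disjoint_right.1 h.disjoint hv)
  have hL : #L * (1 - 14 * θ) ≤ ∑ w ∈ L, x w := by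
    rw [← nsmul_eq_mul]
    exact card_nsmul_le_sum _ _ _ fun w hw => h.le_of_mem_side_of_eq_one hzL hz hw
  have hcard := mul_le_mul_of_nonneg_right h.le_card (by linarith [h.theta_le] : 0 ≤ 1 - 14 * θ)
  have hmul := mul_le_mul_of_nonneg_right hlam (h.isPerronVector.nonneg v)
  have hle : n * (1 / 2 - 14 * θ) ≤ n * ((1 / 2 + 2 * θ) * x v) := by
    nlinarith [h.symm.degIn_graph_compl_le hv, mul_pos (mul_pos hθ hθ) hn]
  nlinarith [le_of_mul_le_mul_left hle hn]

theorem le_perronVector (h : IsExtremalCut k θ G x L R) (v : Fin n) : 1 - 34 * θ ≤ x v := by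
  have hside {L R : Finset (Fin n)} (h : IsExtremalCut k θ G x L R) {z : Fin n} (hzL : z ∈ L)
      (hz : x z = 1) : 1 - 34 * θ ≤ x v :=
    (h.mem_or_mem v).elim
      (fun hv => by linarith [h.le_of_mem_side_of_eq_one hzL hz hv, h.theta_pos])
      (h.le_of_mem_other_side hzL hz)
  obtain ⟨z, hz⟩ := h.isPerronVector.exists_eq_one
  exact (h.mem_or_mem z).elim (hside h · hz) (hside h.symm · hz)

end IsExtremalCut

end Stability

section AtMostOneEdge

variable {n k : ℕ} {G : SimpleGraph (Fin n)} {A X Y : Finset (Fin n)} {v : Fin n}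

/-- The path `[r, s, t]` and zigzags through `A` would form the rim of a wheel with hub `v`. -/
lemma WheelFree.eq_of_adj_of_adj (hG : WheelFree (2 * k + 1) G) (hk : 2 ≤ k) (hA : #A = k - 1)
    (hX : 2 * k ≤ #X) (hvA : ∀ a ∈ A, G.Adj v a) (hvX : ∀ x ∈ X, G.Adj v x)
    (hAX : ∀ a ∈ A, ∀ x ∈ X, G.Adj a x) {r s t : Fin n} (hr : r ∈ X) (hs : s ∈ X) (ht : t ∈ X)
    (hrs : G.Adj r s) (hst : G.Adj s t) : r = t := by
  by_contra hrt
  have hAX' : ∀ a ∈ A, a ∉ X := fun a ha haX => G.irrefl (hAX a ha a haX)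
  have hP : ∀ y ∈ [r, s, t], y ∈ X := by simp [hr, hs, ht]
  exact hG (containsCopy_wheelGraph_of_path (m := 2 * k) (by omega)
    ⟨by simp [hrs.ne, hst.ne, hrt], by simp [hrs, hst], fun y hy => hvX y (hP y hy)⟩
    hr ht hvA hvX hAX (fun a ha haP => hAX' a ha (hP a haP)) (card_pos.1 (by omega))
    (by simp only [List.length_cons, List.length_nil]; omega) hX)

/-- The path `[r, s, a, t, u]` with `a ∈ A` and zigzags through the rest of `A` would form the
rim of a wheel with hub `v`. -/
lemma WheelFree.not_disjoint_of_adj_of_adj (hG : WheelFree (2 * k + 1) G) (hk : 3 ≤ k)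
    (hA : #A = k - 1) (hX : 2 * k ≤ #X) (hvA : ∀ a ∈ A, G.Adj v a) (hvX : ∀ x ∈ X, G.Adj v x)
    (hAX : ∀ a ∈ A, ∀ x ∈ X, G.Adj a x) {r s t u : Fin n} (hr : r ∈ X) (hs : s ∈ X) (ht : t ∈ X)
    (hu : u ∈ X) (hrs : G.Adj r s) (htu : G.Adj t u) :
    ¬ [r, s].Disjoint [t, u] := by
  intro hdisj
  simp only [List.disjoint_cons_left, List.mem_cons, List.not_mem_nil, or_false, not_or] at hdisj
  obtain ⟨⟨hrt, hru⟩, ⟨hst, hsu⟩, -⟩ := hdisj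
  obtain ⟨a, ha⟩ : A.Nonempty := card_pos.1 (by omega)
  have hAX' : ∀ y ∈ X, ∀ a ∈ A, y ≠ a := fun y hy a ha h => G.irrefl (hAX a ha a (h ▸ hy))
  have hP : ∀ y ∈ [r, s, a, t, u], y = a ∨ y ∈ X := by simp [hr, hs, ht, hu]
  have hsub : A.erase a ⊆ A := erase_subset a A
  have hcard : #(A.erase a) = k - 2 := by rw [card_erase_of_mem ha, hA]; omega
  refine hG (containsCopy_wheelGraph_of_path (m := 2 * k) (A := A.erase a) (by omega)
    ⟨?_, ?_, fun y hy => (hP y hy).elim (fun h => h ▸ hvA a ha) (hvX y)⟩ hr hu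
    (fun b hb => hvA b (hsub hb)) hvX (fun b hb => hAX b (hsub hb))
    (fun b hb hbP => ?_) (card_pos.1 (by omega))
    (by simp only [List.length_cons, List.length_nil]; omega) hX)
  · simp [hrs.ne, htu.ne, hrt, hru, hst, hsu, hAX' r hr a ha, hAX' s hs a ha,
      (hAX' t ht a ha).symm, (hAX' u hu a ha).symm]
  · simp [hrs, htu, (hAX a ha s hs).symm, hAX a ha t ht]
  · exact (hP b hbP).elim (ne_of_mem_erase hb) fun hbX => hAX' b hbX b (hsub hb) rfl

theorem WheelFree.exists_forall_adj_eq (hG : WheelFree (2 * k + 1) G) (hk : 3 ≤ k)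
    (hA : #A = k - 1) (hX : 2 * k ≤ #X) (hvA : ∀ a ∈ A, G.Adj v a) (hvX : ∀ x ∈ X, G.Adj v x)
    (hAX : ∀ a ∈ A, ∀ x ∈ X, G.Adj a x) :
    ∃ e : Sym2 (Fin n), ∀ x ∈ X, ∀ y ∈ X, G.Adj x y → s(x, y) = e := by
  by_cases hedge : ∃ a ∈ X, ∃ b ∈ X, G.Adj a b
  · obtain ⟨a, ha, b, hb, hab⟩ := hedge
    refine ⟨s(a, b), fun x hx y hy hxy => ?_⟩
    have hpath {r s t : Fin n} (hr : r ∈ X) (hs : s ∈ X) (ht : t ∈ X) (hrs : G.Adj r s)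
        (hst : G.Adj s t) : r = t :=
      hG.eq_of_adj_of_adj (by omega) hA hX hvA hvX hAX hr hs ht hrs hst
    have hmeet := hG.not_disjoint_of_adj_of_adj hk hA hX hvA hvX hAX hx hy ha hb hxy hab
    simp only [List.disjoint_cons_left, List.mem_cons, List.not_mem_nil, List.disjoint_nil_left,
      or_false, and_true, not_and_or, not_not] at hmeet
    obtain (rfl | rfl) | rfl | rfl := hmeet
    · rw [hpath hy hx hb hxy.symm hab]
    · rw [hpath hy hx ha hxy.symm hab.symm, Sym2.eq_swap]
    · rw [hpath hx hy hb hxy hab, Sym2.eq_swap]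
    · rw [hpath hx hy ha hxy hab.symm]
  · exact ⟨s(v, v), fun x hx y hy hxy => (hedge ⟨x, hx, y, hy, hxy⟩).elim⟩

lemma sum_degIn_self_le_two {e : Sym2 (Fin n)}
    (he : ∀ x ∈ X, ∀ y ∈ X, G.Adj x y → s(x, y) = e) : ∑ x ∈ X, degIn G X x ≤ 2 := by
  classical
  simp only [← card_filter_adj_eq_degIn, card_filter]
  rw [← sum_product', ← card_filter]
  induction e with | _ a b
  refine (card_le_card fun p hp => ?_).trans (card_le_two (a := (a, b)) (b := (b, a)))
  obtain ⟨hpX, hadj⟩ := mem_filter.1 hp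
  have := he _ (mem_product.1 hpX).1 _ (mem_product.1 hpX).2 hadj
  simpa [Prod.ext_iff] using this

lemma sum_degIn_self_le {d : ℕ} (hXY : X ⊆ Y) (hd : ∀ y ∈ Y, degIn G Y y ≤ d)
    {e : Sym2 (Fin n)} (he : ∀ x ∈ X, ∀ y ∈ X, G.Adj x y → s(x, y) = e) :
    ∑ y ∈ Y, degIn G Y y ≤ 2 + 2 * (#(Y \ X) * d) := by
  have hout : ∑ y ∈ Y \ X, degIn G Y y ≤ #(Y \ X) * d :=
    sum_le_card_nsmul _ _ _ fun y hy => hd y (sdiff_subset hy)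
  have hsplit : ∑ x ∈ X, degIn G Y x = ∑ x ∈ X, degIn G X x + ∑ y ∈ Y \ X, degIn G X y := by
    rw [sum_degIn_comm G X (Y \ X), ← sum_add_distrib]
    exact sum_congr rfl fun x _ => by
      rw [← degIn_union G disjoint_sdiff, union_sdiff_of_subset hXY]
  have hcross : ∑ y ∈ Y \ X, degIn G X y ≤ ∑ y ∈ Y \ X, degIn G Y y :=
    sum_le_sum fun y _ => degIn_mono G hXY y
  rw [← sum_sdiff hXY]
  linarith [sum_degIn_self_le_two he]

end AtMostOneEdge

section EdgeCounting

variable {n k : ℕ} {G : SimpleGraph (Fin n)} {A B L R : Finset (Fin n)} {x : Fin n → ℝ} {c θ : ℝ}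
  {v : Fin n}

namespace IsPerronVector

lemma sum_mul_nbrSum_le_sum_degIn (hx : IsPerronVector G x) (A B : Finset (Fin n)) :
    ∑ u ∈ B, x u * nbrSum G x A u ≤ ∑ u ∈ B, (degIn G A u : ℝ) :=
  sum_le_sum fun u _ =>
    (mul_le_of_le_one_left (sum_nonneg fun w _ => hx.nonneg w) (hx.le_one u)).trans
      (nbrSum_le_degIn hx.le_one A u)

end IsPerronVector

lemma mul_degIn_le_nbrSum (hx : ∀ v, c ≤ x v) (A : Finset (Fin n)) (v : Fin n) :
    degIn G A v * c ≤ nbrSum G x A v := by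
  classical
  rw [← card_filter_adj_eq_degIn, ← nsmul_eq_mul]
  exact (card_nsmul_le_sum _ _ _ fun w _ => hx w).trans_eq' (by congr)

lemma sum_mul_nbrSum_le (hAB : Disjoint A B) (hc : 0 ≤ c) (hx : ∀ v, c ≤ x v) :
    ∑ u ∈ A, x u * nbrSum G x B u ≤
      (∑ u ∈ A, x u) * ∑ w ∈ B, x w - c ^ 2 * ∑ u ∈ A, (degIn Gᶜ B u : ℝ) := by
  rw [sum_mul, mul_sum, ← sum_sub_distrib]
  refine sum_le_sum fun u hu => ?_
  have hmiss := mul_le_mul (hx u) (mul_degIn_le_nbrSum (G := Gᶜ) hx B u) (by positivity)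
    (hc.trans (hx u))
  rw [← nbrSum_add_nbrSum_graph_compl (G := G) x (disjoint_left.1 hAB hu)]
  linarith

/-- The eigenvalue equation, with Cauchy–Schwarz bounding the contribution of a complete
bipartite graph by `n / 2 * ∑ v, x v ^ 2`. -/
theorem IsPerronVector.sq_mul_le_sum_degIn (hx : IsPerronVector G x) (hLR : R = Lᶜ)
    (hc : 0 ≤ c) (hcx : ∀ v, c ≤ x v) (hlam : (n / 2 : ℝ) ≤ lam1 G) :
    c ^ 2 * ((lam1 G - n / 2) * n) ≤ ∑ v ∈ L, (degIn G L v : ℝ) + ∑ v ∈ R, (degIn G R v : ℝ) -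
      2 * c ^ 2 * ∑ v ∈ L, (degIn Gᶜ R v : ℝ) := by
  have hdisj : Disjoint L R := hLR ▸ disjoint_compl_right
  have hform : lam1 G * ∑ v, x v ^ 2 =
      (∑ u ∈ L, x u * nbrSum G x L u + ∑ u ∈ L, x u * nbrSum G x R u) +
        (∑ u ∈ R, x u * nbrSum G x L u + ∑ u ∈ R, x u * nbrSum G x R u) := by
    simp only [← sum_add_distrib, ← mul_add, hx.nbrSum_add_nbrSum hLR]
    rw [hLR, sum_add_sum_compl, mul_sum]
    exact sum_congr rfl fun v _ => by ring
  have hsymm : (∑ v ∈ R, degIn Gᶜ L v : ℝ) = ∑ v ∈ L, (degIn Gᶜ R v : ℝ) :=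
    mod_cast sum_degIn_comm Gᶜ L R
  have hRL := sum_mul_nbrSum_le (G := G) hdisj.symm hc hcx
  rw [hsymm] at hRL
  have hcs : (∑ v ∈ L, x v + ∑ v ∈ R, x v) ^ 2 ≤ n * ∑ v, x v ^ 2 := by
    rw [hLR, sum_add_sum_compl]
    simpa using sq_sum_le_card_mul_sum_sq (s := univ) (f := x)
  have hsq : n * c ^ 2 ≤ ∑ v, x v ^ 2 := by
    simpa using card_nsmul_le_sum univ (fun v => x v ^ 2) (c ^ 2)
      fun v _ => pow_le_pow_left₀ hc (hcx v) 2
  linarith [mul_le_mul_of_nonneg_left hsq (sub_nonneg.2 hlam),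
    sq_nonneg (∑ v ∈ L, x v - ∑ v ∈ R, x v), sum_mul_nbrSum_le (G := G) hdisj hc hcx,
    hx.sum_mul_nbrSum_le_sum_degIn L L, hx.sum_mul_nbrSum_le_sum_degIn R R]

lemma sum_sum_adj_le {d : ℕ} (hd : ∀ v ∈ L, degIn G L v ≤ d) [DecidableRel G.Adj] (m : Fin n → ℕ) :
    ∑ v ∈ L, ∑ u ∈ L with G.Adj v u, m u ≤ d * ∑ v ∈ L, m v := by
  simp only [sum_filter]
  rw [sum_comm, mul_sum]
  refine sum_le_sum fun u hu => ?_
  rw [← sum_filter, sum_const, smul_eq_mul]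
  simp only [G.adj_comm _ u, card_filter_adj_eq_degIn]
  exact Nat.mul_le_mul_right _ (hd u hu)

lemma exists_degIn_eq_and_forall_eq_zero {d : ℕ} {m : Fin n → ℕ} (hd : ∀ v ∈ L, degIn G L v ≤ d)
    (h : d * #L + (d + 1) * ∑ v ∈ L, m v < #L + ∑ v ∈ L, degIn G L v) :
    ∃ v ∈ L, degIn G L v = d ∧ m v = 0 ∧ ∀ u ∈ L, G.Adj v u → m u = 0 := by
  classical
  by_contra! hbad
  have hlocal : ∀ v ∈ L, degIn G L v + 1 ≤ d + m v + ∑ u ∈ L with G.Adj v u, m u := by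
    intro v hv
    by_contra! hlt
    have hv' := hd v hv
    obtain ⟨u, hu, hvu, hmu⟩ := hbad v hv (by omega) (by omega)
    have := single_le_sum (f := m) (s := {u ∈ L | G.Adj v u}) (fun u _ => (m u).zero_le)
      (mem_filter.2 ⟨hu, hvu⟩)
    omega
  have := sum_le_sum hlocal
  simp only [sum_add_distrib, sum_const, smul_eq_mul] at this
  linarith [sum_sum_adj_le hd m]

namespace IsExtremalCut

lemma cast_pred (h : IsExtremalCut k θ G x L R) : ((k - 1 : ℕ) : ℝ) = k - 1 := by
  rw [Nat.cast_sub (by linarith [h.three_le]), Nat.cast_one]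

lemma sum_degIn_other_side_le (h : IsExtremalCut k θ G x L R) (hv : v ∈ L)
    (hdeg : degIn G L v = k - 1) : (∑ r ∈ R, degIn G R r : ℝ) ≤ 2 + 12 * k ^ 2 * (θ * n) := by
  classical
  have hk := h.three_le
  have hA : ∀ a ∈ ({a ∈ L | G.Adj v a} : Finset _), a ∈ L ∧ G.Adj v a := fun a => mem_filter.1
  have hAcard : #{a ∈ L | G.Adj v a} = k - 1 := by rw [card_filter_adj_eq_degIn, hdeg]
  set A : Finset (Fin n) := {a ∈ L | G.Adj v a}
  have hvA : insert v A ⊆ L := insert_subset hv fun a ha => (hA a ha).1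
  have hvAcard : (#(insert v A) : ℝ) ≤ k :=
    Nat.cast_le.2 ((card_insert_le v A).trans (by omega))
  obtain ⟨X, hXR, hadj, hX⟩ := exists_common_nbrs (h.disjoint.mono_left hvA) fun u hu =>
    h.degIn_graph_compl_le (hvA hu)
  have hpos := h.theta_mul_pos
  have hmul := mul_le_mul_of_nonneg_right hvAcard (by linarith : 0 ≤ 6 * θ * n)
  have hXcard : (2 * k : ℝ) ≤ #X := by
    nlinarith [h.symm.mul_add_lt_card]
  obtain ⟨e, he⟩ := h.isSpexWheel.1.exists_forall_adj_eq hk hAcard (by exact_mod_cast hXcard)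
    (fun a ha => (hA a ha).2) (hadj v (mem_insert_self v A))
    fun a ha => hadj a (mem_insert_of_mem ha)
  have hsum : (∑ r ∈ R, degIn G R r : ℝ) ≤ 2 + 2 * (#(R \ X) * (k - 1)) := by
    rw [← h.cast_pred]
    exact_mod_cast sum_degIn_self_le hXR (fun r hr => Nat.le_sub_one_of_lt (h.symm.degIn_lt hr)) he
  have hsdiff : (#(R \ X) + #X : ℝ) = #R := mod_cast card_sdiff_add_card_eq_card hXR
  have hmul' := mul_le_mul_of_nonneg_right (by linarith : (#(R \ X) : ℝ) ≤ 6 * k * (θ * n))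
    (by linarith [h.three_le_cast] : (0 : ℝ) ≤ k - 1)
  have : 0 ≤ k * (θ * n) := by positivity
  linarith

lemma defect_add_sum_le (h : IsExtremalCut k θ G x L R)
    (hR : (∑ r ∈ R, degIn G R r : ℝ) ≤ 2 + 12 * k ^ 2 * (θ * n)) :
    (k - 1) * #L - ∑ v ∈ L, (degIn G L v : ℝ) + ∑ v ∈ L, (degIn Gᶜ R v : ℝ) ≤
      25 * k ^ 2 * (θ * n) := by
  have hk := h.three_le_cast
  have hθ := h.theta_pos
  have hθn := h.theta_mul_pos
  have hθ1 := h.theta_le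
  have hcount := h.isPerronVector.sq_mul_le_sum_degIn h.isMaxCut.1 (by linarith)
    h.le_perronVector h.half_le_lam1
  have hlower := h.isSpexWheel.le_lam1_mul (by linarith [h.three_le]) h.pos
  have hsq : 1 - 68 * θ ≤ (1 - 34 * θ) ^ 2 := by linarith [sq_nonneg θ]
  have hexcess : (1 - 68 * θ) * ((k - 1) * n / 2 - 3 * k ^ 2) ≤
      (1 - 34 * θ) ^ 2 * ((lam1 G - n / 2) * n) := by
    refine mul_le_mul hsq (by linarith) ?_ (sq_nonneg _)
    have := mul_le_mul_of_nonneg_right hθ1 (Nat.cast_nonneg (α := ℝ) n)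
    nlinarith [h.le_mul]
  have hmiss := le_mul_of_one_le_left
    (sum_nonneg fun v _ => Nat.cast_nonneg _ : (0 : ℝ) ≤ ∑ v ∈ L, (degIn Gᶜ R v : ℝ))
    (by linarith : 1 ≤ 2 * (1 - 34 * θ) ^ 2)
  have hL := mul_le_mul_of_nonneg_left h.card_le (by linarith : (0 : ℝ) ≤ k - 1)
  have hlin : 35 * (k - 1) * (θ * n) ≤ 12 * k ^ 2 * (θ * n) :=
    mul_le_mul_of_nonneg_right (by nlinarith) hθn.le
  have hconst : 2 + 3 * k ^ 2 * (1 - 68 * θ) ≤ k ^ 2 * (θ * n) := by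
    nlinarith [h.le_mul, mul_nonneg (sq_nonneg (k : ℝ)) hθ.le]
  linarith

lemma exists_degIn_eq_and_complete (h : IsExtremalCut k θ G x L R)
    (hv : ∃ v ∈ L, degIn G L v = k - 1) :
    ∃ v ∈ L, degIn G L v = k - 1 ∧ (∀ r ∈ R, G.Adj v r) ∧
      ∀ u ∈ L, G.Adj v u → ∀ r ∈ R, G.Adj u r := by
  obtain ⟨v, hvL, hv⟩ := hv
  have hk := h.three_le_cast
  have hdefect := h.defect_add_sum_le (h.sum_degIn_other_side_le hvL hv)
  have hdeg : (∑ v ∈ L, degIn G L v : ℝ) ≤ (k - 1) * #L := by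
    rw [mul_comm, ← h.cast_pred, ← nsmul_eq_mul]
    exact sum_le_card_nsmul _ _ _ fun u hu => Nat.cast_le.2 (Nat.le_sub_one_of_lt (h.degIn_lt hu))
  have hlt : ((k - 1) * #L + k * ∑ v ∈ L, (degIn Gᶜ R v : ℝ) : ℝ) <
      #L + ∑ v ∈ L, (degIn G L v : ℝ) := by
    have hθ : 1000 * k ^ 3 * (θ * n) = n := by linear_combination (n : ℝ) * h.mul_eq_one
    nlinarith [mul_le_mul_of_nonneg_left hdefect (by linarith : (0 : ℝ) ≤ k), h.le_card,
      mul_le_mul_of_nonneg_right h.theta_le (Nat.cast_nonneg (α := ℝ) n),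
      (Nat.cast_pos.2 h.pos : (0 : ℝ) < n)]
  rw [← h.cast_pred] at hlt
  obtain ⟨u, huL, hu, hu0, hnbr⟩ := exists_degIn_eq_and_forall_eq_zero (m := degIn Gᶜ R)
    (fun u hu => Nat.le_sub_one_of_lt (h.degIn_lt hu)) (by
      rw [Nat.sub_add_cancel (by linarith [h.three_le])]
      exact_mod_cast hlt)
  have hfull {w : Fin n} (hw : w ∈ L) (h0 : degIn Gᶜ R w = 0) : ∀ r ∈ R, G.Adj w r := fun r =>
    adj_of_degIn_graph_compl_eq_zero (disjoint_left.1 h.disjoint hw) h0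
  exact ⟨u, huL, hu, hfull huL hu0, fun w hw hadj => hfull hw (hnbr w hw hadj)⟩

theorem exists_forall_adj_eq (h : IsExtremalCut k θ G x L R)
    (hv : ∃ v ∈ L, degIn G L v = k - 1) :
    ∃ e : Sym2 (Fin n), ∀ r ∈ R, ∀ s ∈ R, G.Adj r s → s(r, s) = e := by
  classical
  obtain ⟨v, -, hv, hvR, hnbr⟩ := h.exists_degIn_eq_and_complete hv
  have hR : (2 * k : ℝ) ≤ #R := by
    nlinarith [h.symm.mul_add_lt_card, h.theta_mul_pos, h.three_le_cast]
  exact h.isSpexWheel.1.exists_forall_adj_eq h.three_le (A := {a ∈ L | G.Adj v a})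
    (by rw [card_filter_adj_eq_degIn, hv]) (by exact_mod_cast hR)
    (fun a ha => (mem_filter.1 ha).2) hvR
    fun a ha => hnbr a (mem_filter.1 ha).1 (mem_filter.1 ha).2

end IsExtremalCut

end EdgeCounting

section LongPaths

variable {V : Type*} {G H : SimpleGraph V} {S : Set V} {m : ℕ} {u u₁ w : V} {l s t : List V}

/-- Every path of `G` on `m` vertices in `S` has `u` as its first or last vertex. -/
def PathsEndAt (G : SimpleGraph V) (S : Set V) (m : ℕ) (u : V) : Prop :=
  ∀ l : List V, l.length = m → IsPathIn G S l → l.head? = some u ∨ l.getLast? = some u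

namespace PathsEndAt

lemma mem (h : PathsEndAt G S m u) (hlen : l.length = m) (hl : IsPathIn G S l) : u ∈ l :=
  (h l hlen hl).elim List.mem_of_head? List.mem_of_getLast?

lemma eq_nil_or_eq_nil (h : PathsEndAt G S m u) (hlen : (s ++ u :: t).length = m)
    (hl : IsPathIn G S (s ++ u :: t)) : s = [] ∨ t = [] := by
  have hnodup := List.nodup_append.1 hl.nodup
  rcases h _ hlen hl with h | h
  · refine .inl (by_contra fun hs => ?_)
    rw [List.head?_append_of_ne_nil _ hs] at h
    exact hnodup.2.2 u (List.mem_of_head? h) u List.mem_cons_self rfl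
  · refine .inr (by_contra fun ht => ?_)
    obtain ⟨b, t, rfl⟩ := List.exists_cons_of_ne_nil ht
    rw [List.getLast?_append_of_ne_nil _ (List.cons_ne_nil u _), List.getLast?_cons_cons] at h
    exact (List.nodup_cons.1 hnodup.2.1).1 (List.mem_of_getLast? h)

lemma exists_isPathIn_cons (h : PathsEndAt G S m u) (hlen : l.length = m) (hl : IsPathIn G S l) :
    ∃ t, (u :: t).length = m ∧ IsPathIn G S (u :: t) := by
  rcases h l hlen hl with hu | hu
  · obtain ⟨t, rfl⟩ := List.head?_eq_some_iff.1 hu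
    exact ⟨t, hlen, hl⟩
  · obtain ⟨t, rfl⟩ := List.getLast?_eq_some_iff.1 hu
    exact ⟨t.reverse, by simpa using hlen, by simpa using hl.reverse⟩

/-- Another neighbour `w` of `u` would give a path of the same length with `u` in its interior: a
rotation of the given path if `w` lies on it, and the path shifted by `w` otherwise. -/
theorem eq_of_adj (h : PathsEndAt G S m u) (hm : 3 ≤ m) (hlen : (u :: u₁ :: t).length = m)
    (hl : IsPathIn G S (u :: u₁ :: t)) (hw : w ∈ S) (huw : G.Adj u w) : w = u₁ := by
  by_contra hne
  obtain ⟨huu₁, hchain⟩ := List.isChain_cons_cons.1 hl.isChain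
  by_cases hwt : w ∈ t
  · obtain ⟨A, B, rfl⟩ := List.append_of_mem hwt
    have hperm : ((u₁ :: A).reverse ++ u :: w :: B).Perm (u :: u₁ :: (A ++ w :: B)) :=
      List.perm_middle.trans (((List.reverse_perm (u₁ :: A)).append_right _).cons u)
    obtain ⟨hA, hB, -⟩ := (List.isChain_append (l₁ := u₁ :: A)).1 hchain
    have hpath : IsPathIn G S ((u₁ :: A).reverse ++ u :: w :: B) := by
      refine ⟨hperm.nodup_iff.2 hl.nodup, List.isChain_append.2
        ⟨List.isChain_reverse.2 (hA.imp fun _ _ h => h.symm),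
          List.isChain_cons_cons.2 ⟨huw, hB⟩, ?_⟩, fun x hx => hl.mem x (hperm.mem_iff.1 hx)⟩
      simpa using huu₁.symm
    simpa using h.eq_nil_or_eq_nil (hperm.length_eq.trans hlen) hpath
  · have hpath : IsPathIn G S ((w :: u :: u₁ :: t).dropLast) := by
      have hwl : IsPathIn G S (w :: u :: u₁ :: t) :=
        hl.cons huw.symm hw (by simp [huw.ne', hne, hwt])
      exact ⟨hwl.nodup.sublist (List.dropLast_sublist _), hwl.isChain.dropLast,
        fun x hx => hwl.mem x (List.mem_of_mem_dropLast hx)⟩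
    have ht : t ≠ [] := by
      rintro rfl
      simp only [List.length_nil, List.length_cons] at hlen
      omega
    have := h.eq_nil_or_eq_nil (s := [w]) (t := (u₁ :: t).dropLast) (by simpa using hlen)
      (by simpa using hpath)
    simp [List.dropLast_cons_of_ne_nil ht] at this

lemma not_isCycleIn (h : PathsEndAt G S (m - 1) u)
    (hHG : ∀ x ≠ u, ∀ y ≠ u, H.Adj x y → G.Adj x y) (f : ZMod m → V) : ¬ IsCycleIn H S f := by
  intro hf
  obtain ⟨l, hlen, hl⟩ : ∃ l : List V, l.length = m - 1 ∧ IsPathIn H (S \ {u}) l := by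
    by_cases hu : ∃ i, f i = u
    · obtain ⟨i, rfl⟩ := hu
      exact hf.exists_isPathIn_diff i
    · have hf' : IsCycleIn H (S \ {u}) f :=
        ⟨hf.injective, hf.adj, fun i => ⟨hf.mem i, fun h => hu ⟨i, h⟩⟩⟩
      obtain ⟨l, hlen, hl⟩ := hf'.exists_isPathIn_diff 0
      exact ⟨l, hlen, hl.subset fun x hx => (hl.mem x hx).1⟩
  have hlG : IsPathIn G S l := hl.mono Set.sdiff_subset fun x hx y hy => hHG x hx.2 y hy.2
  exact (hl.mem u (h.mem hlen hlG)).2 rfl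

end PathsEndAt

/-- A path ending elsewhere would, together with `b`, form the rim of a wheel with hub `a`. -/
lemma ContainsCopy.pathsEndAt_of_not {k : ℕ} (hk : 2 ≤ k)
    (hG : ¬ ContainsCopy (wheelGraph (2 * k + 1)) G) {a b : V} (hab : G.Adj a b) (hb : b ∉ S)
    (haS : ∀ x ∈ S, G.Adj a x) (hbS : ∀ x ∈ S, x ≠ u → G.Adj b x) :
    PathsEndAt G S (2 * k - 1) u := by
  intro l hlen hl
  by_contra! hu
  have hne : l ≠ [] := List.ne_nil_of_length_pos (by omega)
  obtain ⟨c, l, rfl⟩ := List.exists_cons_of_ne_nil hne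
  have hadj {x : V} (hx : x ∈ c :: l) (hxu : some x ≠ some u) : G.Adj b x :=
    hbS x (hl.mem x hx) (by simpa using hxu)
  have hrim : IsPathIn G (G.neighborSet a) (b :: c :: l) :=
    (hl.subset fun x hx => haS x (hl.mem x hx)).cons (hadj List.mem_cons_self hu.1) hab
      fun hmem => hb (hl.mem b hmem)
  obtain ⟨f, hf⟩ := hrim.exists_isCycleIn (m := 2 * k) (List.cons_ne_nil _ _)
    (by
      rw [List.getLast_cons hne]
      refine (hadj (List.getLast_mem hne) ?_).symm
      rw [← List.getLast?_eq_some_getLast hne]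
      exact hu.2)
    (by simp only [List.length_cons] at hlen ⊢; omega)
  exact hG ((containsCopy_wheelGraph_iff (by omega)).2 ⟨a, f, hf⟩)

end LongPaths

section Exchange

variable {n k : ℕ} {G H : SimpleGraph (Fin n)} {L N : Finset (Fin n)} {e : Sym2 (Fin n)}
  {D M : Finset (Sym2 (Fin n))} {u u' u₁ r r' : Fin n}

/-- What the final exchange argument needs to know about an extremal graph `G` and a side `L` of a
maximum cut: all edges outside `L` equal `e`, and a wheel-free graph cannot gain many more edges
than it loses. The factor `9 / 10` is at most `(19 / 20) ^ 2`, where `19 / 20` bounds the entries of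
the Perron vector from below. -/
structure IsExchangeCut (k : ℕ) (G : SimpleGraph (Fin n)) (L : Finset (Fin n))
    (e : Sym2 (Fin n)) : Prop where
  three_le : 3 ≤ k
  wheelFree : WheelFree (2 * k + 1) G
  edgeCount_le (H : SimpleGraph (Fin n)) (hH : WheelFree (2 * k + 1) H) :
    9 * edgeCount (H \ G) ≤ 10 * edgeCount (G \ H)
  degIn_lt (v : Fin n) (hv : v ∈ L) : degIn G L v < k
  exists_common_nbr (U : Finset (Fin n)) (hU : U ⊆ L) (hcard : #U ≤ 2 * k) :
    ∃ r, ∀ u ∈ U, G.Adj r u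
  eq_of_adj (a : Fin n) (ha : a ∉ L) (b : Fin n) (hb : b ∉ L) (hab : G.Adj a b) : s(a, b) = e

namespace IsExchangeCut

lemma card_le_card (h : IsExchangeCut k G L e) (hH : WheelFree (2 * k + 1) H)
    (hD : G.deleteEdges D ≤ H) (hM : ∀ s ∈ M, s ∈ H.edgeSet ∧ s ∉ G.edgeSet) :
    9 * #M ≤ 10 * #D := by
  have hnew : #M ≤ edgeCount (H \ G) :=
    Finset.card_le_card fun s hs => by simpa using hM s hs
  have hold : edgeCount (G \ H) ≤ #D := by
    refine Finset.card_le_card fun s hs => ?_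
    induction s with | _ x y
    simp only [SimpleGraph.mem_edgeFinset, SimpleGraph.mem_edgeSet, SimpleGraph.sdiff_adj] at hs
    exact by_contra fun hxy => hs.2 (hD ((SimpleGraph.deleteEdges_adj).2 ⟨hs.1, hxy⟩))
  have := h.edgeCount_le H hH
  omega

lemma not_isCycleIn (h : IsExchangeCut k G L e) (f : ZMod (2 * k) → Fin n) :
    ¬ IsCycleIn G L f := by
  intro hf
  have hk := h.three_le
  have : NeZero (2 * k) := ⟨by omega⟩
  obtain ⟨r, hr⟩ := h.exists_common_nbr (univ.image f)
    (image_subset_iff.2 fun i _ => hf.mem i)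
    (card_image_le.trans (by rw [card_univ, ZMod.card]))
  exact h.wheelFree ((containsCopy_wheelGraph_iff (by omega)).2
    ⟨r, f, hf.injective, hf.adj, fun i => hr _ (mem_image_of_mem f (mem_univ i))⟩)

theorem wheelFree_completeCut (h : IsExchangeCut k G L e) (hHG : H ≤ G)
    (hH : ∀ a ∉ L, ∀ b ∉ L, ¬ H.Adj a b) : WheelFree (2 * k + 1) (completeCut H L) := by
  have hk := h.three_le
  have hadj {x y : Fin n} (hx : x ∈ L) (hy : y ∈ L) (hxy : (completeCut H L).Adj x y) :
      G.Adj x y := hHG ((completeCut_adj_of_mem hx hy).1 hxy)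
  refine wheelFree_of_forall_not_isCycleIn (by omega) (fun v hv => ?_) (fun a ha b hb hab =>
    hH a ha b hb ((completeCut_adj_of_notMem ha hb).1 hab)) fun f hf =>
    h.not_isCycleIn f ⟨hf.injective, fun i => hadj (hf.mem i) (hf.mem _) (hf.adj i), hf.mem⟩
  exact (degIn_le_degIn fun y hy => hadj hv hy).trans_lt (h.degIn_lt v hv)

lemma exists_adj_of_not_adj (h : IsExchangeCut k G L e) (hu : u ∈ L) (hr : r ∉ L)
    (hur : ¬ G.Adj u r) : ∃ a ∉ L, ∃ b ∉ L, G.Adj a b := by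
  by_contra! hindep
  have := h.card_le_card (D := ∅) (M := {s(u, r)}) (h.wheelFree_completeCut le_rfl hindep)
    ((G.deleteEdges_le _).trans (le_completeCut G L)) (by simp [completeCut_adj, hu, hr, hur])
  simp at this

lemma exists_isPathIn_of_not_adj (h : IsExchangeCut k G L e) (hu : u ∈ L) (hr : r ∉ L)
    (hur : ¬ G.Adj u r) : ∃ l : List (Fin n), l.length = 2 * k - 1 ∧ IsPathIn G L l := by
  by_contra! hpath
  have hk := h.three_le
  have hfree : WheelFree (2 * k + 1) (completeCut G L) := by
    refine wheelFree_of_forall_not_isPathIn (by omega) (fun v hv => ?_) (fun a ha b hb hab =>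
      h.eq_of_adj a ha b hb ((completeCut_adj_of_notMem ha hb).1 hab)) fun l hlen hl =>
      hpath l hlen (hl.mono subset_rfl fun x hx y hy => (completeCut_adj_of_mem hx hy).1)
    exact (degIn_le_degIn fun y hy => (completeCut_adj_of_mem hv hy).1).trans_lt (h.degIn_lt v hv)
  have := h.card_le_card (D := ∅) (M := {s(u, r)}) hfree
    ((G.deleteEdges_le _).trans (le_completeCut G L)) (by simp [completeCut_adj, hu, hr, hur])
  simp at this

lemma not_adj_unique (h : IsExchangeCut k G L e) (hu : u ∈ L) (hr : r ∉ L) (hur : ¬ G.Adj u r)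
    (hu' : u' ∈ L) (hr' : r' ∉ L) (hur' : ¬ G.Adj u' r') : s(u, r) = s(u', r') := by
  by_contra hne
  have hfree : WheelFree (2 * k + 1) (completeCut (G.deleteEdges {e}) L) :=
    h.wheelFree_completeCut (G.deleteEdges_le _) fun a ha b hb hab => by
      rw [SimpleGraph.deleteEdges_adj] at hab
      exact hab.2 (h.eq_of_adj a ha b hb hab.1)
  have := h.card_le_card (D := {e}) (M := {s(u, r), s(u', r')}) hfree
    (by rw [coe_singleton]; exact le_completeCut _ L)
    (by simp [completeCut_adj, hu, hr, hur, hu', hr', hur'])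
  rw [card_pair hne, card_singleton] at this
  omega

lemma pathsEndAt (h : IsExchangeCut k G L e) (hu : u ∈ L) (hr : r ∉ L) (hur : ¬ G.Adj u r) :
    PathsEndAt G L (2 * k - 1) u := by
  have hk := h.three_le
  obtain ⟨a, ha, b, hb, hab⟩ := h.exists_adj_of_not_adj hu hr hur
  have hadj {x y : Fin n} (hx : x ∉ L) (hy : y ∈ L) (hxy : x ≠ r ∨ y ≠ u) : G.Adj x y := by
    by_contra hn
    have := h.not_adj_unique hu hr hur hy hx fun hyx => hn hyx.symm
    grind
  obtain ⟨c, hc, d, hd, hdr, hcd⟩ : ∃ c ∉ L, ∃ d ∉ L, d ≠ r ∧ G.Adj c d := by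
    by_cases hbr : b = r
    · exact ⟨b, hb, a, ha, fun har => hab.ne (har.trans hbr.symm), hab.symm⟩
    · exact ⟨a, ha, b, hb, hbr, hab⟩
  exact ContainsCopy.pathsEndAt_of_not (by omega) h.wheelFree hcd.symm (by simpa using hc)
    (fun x hx => hadj hd hx (.inl hdr)) fun x hx hxu => hadj hc hx (.inr hxu)

theorem wheelFree_completeCut_rewire (h : IsExchangeCut k G L e) (hu : u ∈ L)
    (hends : PathsEndAt G L (2 * k - 1) u) (hHG : H ≤ G) (hH : ∀ a ∉ L, ∀ b ∉ L, ¬ H.Adj a b)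
    (hN : #N < k) (hNL : ∀ w ∈ N, G.Adj u w ∨ degIn H L w + 1 < k) :
    WheelFree (2 * k + 1) (completeCut (rewire H u N) L) := by
  classical
  have hk := h.three_le
  have hadj {x y : Fin n} (hx : x ≠ u) (hy : y ≠ u) (hxy : (rewire H u N).Adj x y) : H.Adj x y :=
    (rewire_adj_of_ne hx hy).1 hxy
  have hadj_left {y : Fin n} (hy : (rewire H u N).Adj u y) : y ∈ N := (rewire_adj_left.1 hy).2
  refine wheelFree_of_forall_not_isCycleIn (by omega) (fun v hv => ?_) (fun a ha b hb hab => ?_)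
    fun f hf => hends.not_isCycleIn (H := rewire H u N) (fun x hx y hy hxy => hHG (hadj hx hy hxy))
      f ⟨hf.injective, fun i => (completeCut_adj_of_mem (hf.mem i) (hf.mem _)).1 (hf.adj i), hf.mem⟩
  · have hdegIn : degIn (completeCut (rewire H u N) L) L v ≤ degIn (rewire H u N) L v :=
      degIn_le_degIn fun y hy => (completeCut_adj_of_mem hv hy).1
    refine hdegIn.trans_lt ?_
    by_cases hvu : v = u
    · subst hvu
      exact (degIn_le_card_of_forall fun y _ => hadj_left).trans_lt hN
    by_cases huv : v ∈ N → G.Adj u v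
    · refine (degIn_le_degIn fun y _ hvy => ?_).trans_lt (h.degIn_lt v hv)
      by_cases hyu : y = u
      · subst hyu
        exact (huv (hadj_left hvy.symm)).symm
      · exact hHG (hadj hvu hyu hvy)
    · obtain ⟨hvN, huv⟩ := Classical.not_imp.1 huv
      refine lt_of_le_of_lt ?_ ((hNL v hvN).resolve_left huv)
      rw [← card_filter_adj_eq_degIn (G := H)]
      refine (degIn_le_card_of_forall fun y hy hvy => ?_).trans (card_insert_le u _)
      by_cases hyu : y = u
      · simp [hyu]
      · simp [hy, hadj hvu hyu hvy]
  · exact hH a ha b hb (hadj (ne_of_mem_of_not_mem hu ha).symm (ne_of_mem_of_not_mem hu hb).symm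
      ((completeCut_adj_of_notMem ha hb).1 hab))

/-- Replace the edges of `D` by `ur` and the edges from `u` to `N`; the only neighbour `u₁` of `u`
in `L` is kept. -/
lemma nine_mul_card_add_one_le (h : IsExchangeCut k G L e) (hu : u ∈ L) (hr : r ∉ L)
    (hur : ¬ G.Adj u r) (huu₁ : G.Adj u u₁) (hnbr : ∀ w ∈ L, G.Adj u w → w = u₁)
    (he : e ∈ D) (hN : #N + 1 < k)
    (hNL : ∀ w ∈ N, w ∈ L ∧ w ≠ u ∧ w ≠ u₁ ∧ degIn (G.deleteEdges D) L w + 1 < k) :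
    9 * (#N + 1) ≤ 10 * #D := by
  set G' := G.deleteEdges (D : Set (Sym2 (Fin n)))
  have hG'G : G' ≤ G := G.deleteEdges_le _
  have hindep (a : Fin n) (ha : a ∉ L) (b : Fin n) (hb : b ∉ L) : ¬ G'.Adj a b := fun hab =>
    (SimpleGraph.deleteEdges_adj.1 hab).2 (h.eq_of_adj a ha b hb (hG'G hab) ▸ he)
  have hfree := h.wheelFree_completeCut_rewire (N := insert u₁ N) hu (h.pathsEndAt hu hr hur) hG'G
    hindep ((card_insert_le _ _).trans_lt hN) fun w hw =>
      (mem_insert.1 hw).imp (fun hwu₁ => by rwa [hwu₁]) fun hwN => (hNL w hwN).2.2.2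
  have hadj {x y : Fin n} (hxy : G'.Adj x y) (hx : x ∈ L) (hy : y ∈ L) :
      (rewire G' u ↑(insert u₁ N)).Adj x y := by
    by_cases hxu : x = u
    · subst hxu
      exact rewire_adj_left.2 ⟨hxy.ne', by simp [hnbr y hy (hG'G hxy)]⟩
    by_cases hyu : y = u
    · subst hyu
      exact (rewire_adj_left.2 ⟨hxy.ne, by simp [hnbr x hx (hG'G hxy).symm]⟩).symm
    · exact (rewire_adj_of_ne hxu hyu).2 hxy
  have hle : G' ≤ completeCut (rewire G' u ↑(insert u₁ N)) L := fun x y hxy => by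
    have := hadj hxy
    have := hindep x
    rw [completeCut_adj]
    grind
  have hcard := h.card_le_card (M := insert s(u, r) (N.image fun w => s(u, w))) hfree hle (by
    simp only [forall_mem_insert, forall_mem_image, SimpleGraph.mem_edgeSet]
    refine ⟨⟨completeCut_adj.2 (.inr (.inl ⟨hu, hr⟩)), hur⟩, fun w hw => ?_⟩
    obtain ⟨hwL, hwu, hwu₁, -⟩ := hNL w hw
    exact ⟨(completeCut_adj_of_mem hu hwL).2 (rewire_adj_left.2 ⟨hwu, by simp [hw]⟩),
      fun huw => hwu₁ (hnbr w hwL huw)⟩)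
  have hrN : s(u, r) ∉ N.image fun w => s(u, w) := by
    simp only [mem_image, Sym2.congr_right, not_exists, not_and]
    exact fun w hw hwr => hr (hwr ▸ (hNL w hw).1)
  rwa [card_insert_of_notMem hrN, card_image_of_injective _ fun x y => Sym2.congr_right.1] at hcard

lemma exists_isPathIn_cons_cons (h : IsExchangeCut k G L e) (hu : u ∈ L) (hr : r ∉ L)
    (hur : ¬ G.Adj u r) : ∃ u₁ t, t.length = 2 * k - 3 ∧ IsPathIn G L (u :: u₁ :: t) ∧
      ∀ w ∈ L, G.Adj u w → w = u₁ := by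
  have hk := h.three_le
  have hends := h.pathsEndAt hu hr hur
  obtain ⟨l, hlen, hl⟩ := h.exists_isPathIn_of_not_adj hu hr hur
  obtain ⟨t, hlen, hl⟩ := hends.exists_isPathIn_cons hlen hl
  obtain _ | ⟨u₁, t⟩ := t
  · simp only [List.length_nil, List.length_cons] at hlen
    omega
  · refine ⟨u₁, t, ?_, hl, fun w hw huw => hends.eq_of_adj (by omega) hlen hl hw huw⟩
    simp only [List.length_cons] at hlen
    omega

/-- Trade `e` and one edge of a long path away from `u` for three edges. -/
lemma not_four_le (h : IsExchangeCut k G L e) (hu : u ∈ L) (hr : r ∉ L) (hur : ¬ G.Adj u r) :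
    ¬ 4 ≤ k := by
  intro hk
  obtain ⟨u₁, t, hlen, hl, hnbr⟩ := h.exists_isPathIn_cons_cons hu hr hur
  obtain ⟨p, q, t, rfl⟩ : ∃ p q t', t = p :: q :: t' := by
    match t, hlen with
    | [], hlen | [_], hlen => simp only [List.length_nil, List.length_cons] at hlen; omega
    | p :: q :: t, _ => exact ⟨p, q, t, rfl⟩
  have hnodup := hl.nodup
  have hchain := hl.isChain
  have hmem := hl.mem
  simp only [List.nodup_cons, List.mem_cons, not_or] at hnodup
  simp only [List.isChain_cons_cons] at hchain
  simp only [List.forall_mem_cons, mem_coe] at hmem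
  obtain ⟨huu₁, -, hpq, -⟩ := hchain
  obtain ⟨-, -, hpL, hqL, -⟩ := hmem
  have hlt {v w : Fin n} (hv : v ∈ L) (hw : w ∈ L) (hvw : G.Adj v w) (hD : s(v, w) = s(p, q)) :
      degIn (G.deleteEdges ({e, s(p, q)} : Finset (Sym2 (Fin n)))) L v + 1 < k := by
    have hlt := degIn_lt_degIn (G.deleteEdges_le ({e, s(p, q)} : Finset (Sym2 (Fin n)))) hw hvw
      (by simp [hD])
    have := h.degIn_lt v hv
    omega
  have hcard := h.nine_mul_card_add_one_le (N := {p, q}) (D := {e, s(p, q)}) hu hr hur huu₁ hnbr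
    (mem_insert_self _ _) (by rw [card_pair hpq.ne]; omega) (by
      simp only [forall_mem_insert, mem_singleton, forall_eq]
      exact ⟨⟨hpL, Ne.symm (by tauto), Ne.symm (by tauto), hlt hpL hqL hpq rfl⟩,
        ⟨hqL, Ne.symm (by tauto), Ne.symm (by tauto), hlt hqL hpL hpq.symm Sym2.eq_swap⟩⟩)
  rw [card_pair hpq.ne] at hcard
  have := card_le_two (a := e) (b := s(p, q))
  omega

/-- Every neighbour `y ≠ q` of `w` in `L` is impossible: if `y` is off the path, then `u₁pqwy` is a
path avoiding `u`, and otherwise `y` has three neighbours. -/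
lemma degIn_le_one_of_isPathIn (h : IsExchangeCut 3 G L e) {p q w : Fin n}
    (hends : PathsEndAt G L 5 u) (hl : IsPathIn G L [u, u₁, p, q, w])
    (hnbr : ∀ y ∈ L, G.Adj u y → y = u₁) : degIn G L w ≤ 1 := by
  have hnodup := hl.nodup
  have hchain := hl.isChain
  have hmem := hl.mem
  simp only [List.nodup_cons, List.mem_cons, List.not_mem_nil, or_false, not_or] at hnodup
  simp only [List.isChain_cons_cons] at hchain
  simp only [List.forall_mem_cons, mem_coe] at hmem
  obtain ⟨huu₁, hu₁p, hpq, hqw, -⟩ := hchain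
  obtain ⟨huL, hu₁L, hpL, hqL, hwL, -⟩ := hmem
  have hthree {v a b c : Fin n} (hv : v ∈ L) (ha : a ∈ L ∧ G.Adj v a) (hb : b ∈ L ∧ G.Adj v b)
      (hc : c ∈ L ∧ G.Adj v c) (habc : #{a, b, c} = 3) : False :=
    (h.degIn_lt v hv).not_ge (habc ▸ card_le_degIn (by simp [ha, hb, hc]))
  refine (degIn_le_card_of_forall (s := {q}) fun y hy hwy => ?_).trans (card_singleton q).le
  rw [mem_singleton]
  by_contra hyq
  have hyu : y ≠ u := by
    rintro rfl
    exact hnodup.2.1.2.2 (hnbr w hwL hwy.symm).symm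
  have hyu₁ : y ≠ u₁ := by
    rintro rfl
    exact hthree hu₁L ⟨huL, huu₁.symm⟩ ⟨hpL, hu₁p⟩ ⟨hwL, hwy.symm⟩
      (card_eq_three.2 ⟨u, p, w, by tauto, by tauto, by tauto, rfl⟩)
  have hyp : y ≠ p := by
    rintro rfl
    exact hthree hpL ⟨hu₁L, hu₁p.symm⟩ ⟨hqL, hpq⟩ ⟨hwL, hwy.symm⟩
      (card_eq_three.2 ⟨u₁, q, w, by tauto, by tauto, by tauto, rfl⟩)
  have hpath : IsPathIn G L [u₁, p, q, w, y] := by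
    refine ⟨?_, by simp [hu₁p, hpq, hqw, hwy], by simp [hu₁L, hpL, hqL, hwL, hy]⟩
    have := hwy.ne
    simp only [List.nodup_cons, List.mem_cons, List.not_mem_nil, or_false, not_or]
    grind
  have := hends.mem rfl hpath
  simp only [List.mem_cons, List.not_mem_nil, or_false] at this
  tauto

lemma ne_three (h : IsExchangeCut k G L e) (hu : u ∈ L) (hr : r ∉ L) (hur : ¬ G.Adj u r) :
    k ≠ 3 := by
  rintro rfl
  obtain ⟨u₁, t, hlen, hl, hnbr⟩ := h.exists_isPathIn_cons_cons hu hr hur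
  obtain ⟨p, q, w, rfl⟩ := List.length_eq_three.1 hlen
  have hw := h.degIn_le_one_of_isPathIn (h.pathsEndAt hu hr hur) hl hnbr
  have hnodup := hl.nodup
  simp only [List.nodup_cons, List.mem_cons, List.not_mem_nil, or_false, not_or] at hnodup
  have hle : degIn (G.deleteEdges ({e} : Finset (Sym2 (Fin n)))) L w ≤ degIn G L w :=
    degIn_le_degIn fun y _ hwy => G.deleteEdges_le _ hwy
  have := h.nine_mul_card_add_one_le (N := {w}) (D := {e}) hu hr hur
    (List.isChain_cons_cons.1 hl.isChain).1 hnbr (mem_singleton_self e) (by simp) (by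
      simp only [mem_singleton, forall_eq]
      exact ⟨hl.mem w (by simp), Ne.symm (by tauto), Ne.symm (by tauto), by omega⟩)
  simp at this

theorem adj (h : IsExchangeCut k G L e) (hu : u ∈ L) (hr : r ∉ L) : G.Adj u r := by
  by_contra hur
  have := h.three_le
  have := h.ne_three hu hr hur
  have := h.not_four_le hu hr hur
  omega

end IsExchangeCut

end Exchange

section Completeness

theorem exists_forall_isExtremalCut {k : ℕ} (hk : 3 ≤ k) :
    ∃ N, ∀ n ≥ N, ∀ G : SimpleGraph (Fin n), IsSpexWheel (2 * k + 1) G →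
      ∀ L R : Finset (Fin n), IsMaxCut G L R → ∃ θ x, IsExtremalCut k θ G x L R := by
  obtain ⟨θ, hθ, hkθ⟩ : ∃ θ : ℝ, 0 < θ ∧ 1000 * k ^ 3 * θ = 1 :=
    ⟨(1000 * k ^ 3)⁻¹, by positivity, mul_inv_cancel₀ (by positivity)⟩
  obtain ⟨N₁, hN₁⟩ := WheelFree.exists_forall_hasSparseNbhds (k := k) (by omega) (pow_pos hθ 2)
  obtain ⟨N₂, hN₂⟩ := exists_nat_gt (5 * k ^ 2 / θ)
  rw [div_lt_iff₀' hθ] at hN₂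
  refine ⟨max N₁ (N₂ + 1), fun n hn G hG L R hLR => ?_⟩
  have : NeZero n := ⟨by omega⟩
  obtain ⟨x, hx⟩ := exists_isPerronVector G
  have hN₂n : (N₂ : ℝ) ≤ n := by
    exact_mod_cast (Nat.le_succ N₂).trans (le_of_max_le_right hn)
  exact ⟨θ, x, hk, hkθ, hN₂.le.trans (mul_le_mul_of_nonneg_left hN₂n hθ.le), hG, hx,
    hN₁ n (le_of_max_le_left hn) G hG.1, hLR⟩

theorem IsExtremalCut.exists_isExchangeCut {n k : ℕ} {θ : ℝ} {G : SimpleGraph (Fin n)}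
    {x : Fin n → ℝ} {L R : Finset (Fin n)} (h : IsExtremalCut k θ G x L R)
    (hv : ∃ v ∈ L, degIn G L v = k - 1) : ∃ e, IsExchangeCut k G L e := by
  obtain ⟨e, he⟩ := h.exists_forall_adj_eq hv
  have hmem {r : Fin n} (hr : r ∉ L) : r ∈ R := (h.mem_or_mem r).resolve_left hr
  refine ⟨e, h.three_le, h.isSpexWheel.1, fun H => ?_, fun v => h.degIn_lt, fun U hU hcard => ?_,
    fun a ha b hb => he a (hmem ha) b (hmem hb)⟩
  · exact h.isSpexWheel.edgeCount_sdiff_le h.isPerronVector fun v => by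
      linarith [h.le_perronVector v, h.theta_le]
  · obtain ⟨C, -, hC, hadj⟩ := h.exists_card_eq_common_nbrs hU (hcard.trans (Nat.le_succ _))
    obtain ⟨r, hr⟩ : C.Nonempty := card_pos.1 (by omega)
    exact ⟨r, fun u hu => (hadj u hu r hr).symm⟩

end Completeness

theorem complete_between_parts_general (k : ℕ) (hk : 3 ≤ k) :
    ∃ N : ℕ, ∀ n : ℕ, N ≤ n → ∀ G : SimpleGraph (Fin n), IsSpexWheel (2 * k + 1) G →
      ∀ L R : Finset (Fin n), IsMaxCut G L R →
        (∃ v ∈ L, degIn G L v = k - 1) →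
        ∀ u ∈ L, ∀ v ∈ R, G.Adj u v := by
  obtain ⟨N, hN⟩ := exists_forall_isExtremalCut hk
  refine ⟨N, fun n hn G hG L R hLR hv u hu r hr => ?_⟩
  obtain ⟨θ, x, h⟩ := hN n hn G hG L R hLR
  obtain ⟨e, he⟩ := h.exists_isExchangeCut hv
  exact he.adj hu (disjoint_right.1 h.disjoint hr)

/-- If `L` has a vertex of internal degree `k - 1`, then every vertex
of `L` is adjacent to every vertex of `R`. -/
theorem complete_between_parts (k : ℕ) (hk : 3 ≤ k) (hk4 : k ≠ 4) (hk5 : k ≠ 5) :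
    ∃ N : ℕ, ∀ n : ℕ, N ≤ n → ∀ G : SimpleGraph (Fin n), IsSpexWheel (2 * k + 1) G →
      ∀ L R : Finset (Fin n), IsMaxCut G L R →
        (∃ v ∈ L, degIn G L v = k - 1) →
        ∀ u ∈ L, ∀ v ∈ R, G.Adj u v :=
  complete_between_parts_general k hk
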